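/- Let (U,ρ) be a complete metric space, let g ∈ W̃(ℝ,U), let p ≥ 1, and let F ∈ W̃_1(ℝ, (cl U, dist_{ρ'})) be such that F ∈ M*_p(ℝ, cl_b U) (i.e. F takes values in the non-empty closed bounded subsets of U and satisfies the M*_p condition with respect to the Hausdorff metric dist_ρ). Suppose that for every ε > 0 the set T(ε) := P^{(ρ')}_1(ε; g) ∩ P^{(dist_{ρ'})}_1(ε; F) is relatively dense. Then for every δ > 0 and every function h ∈ W_1(ℝ,ℝ) with dense countable frequency module Mod h, the selection f_δ ∈ W̃(ℝ,U) provided by the selection theorem (with f_δ(t) ∈ F(t) a.e., ρ(f_δ(t), g(t)) < ρ(g(t), F(t)) + δ a.e., and for every ε' > 0 an ε > 0 with P^{(ρ')}_1(ε'; f_δ) ⊇ T(ε) ∩ P^{(ρ_ℝ)}_1(ε; h)) can be chosen so that moreover f_δ ∈ W̃(ℝ,U) ∩ M*_p(ℝ,U) ⊆ W̃_p(ℝ,U). -/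

import Mathlib

open MeasureTheory Filter Topology TopologicalSpace
open scoped ENNReal Pointwise

noncomputable section

/-- The truncated ("bounded") distance `ρ'(x,y) = min {1, ρ(x,y)}` on a metric space. -/
def bdist {α : Type*} [PseudoMetricSpace α] : α → α → ℝ := fun x y => min 1 (dist x y)

/-- The Hausdorff distance `dist_{ρ'}` (corresponding to the truncated metric `ρ'`)
between non-empty closed subsets of a metric space. -/
def clDist {α : Type*} [MetricSpace α] : Closeds α → Closeds α → ℝ :=
  fun A B => (min 1 (EMetric.hausdorffEdist (A : Set α) (B : Set α))).toReal

/-- The Hausdorff distance `dist_ρ` between (non-empty closed bounded) subsets. -/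
def clbDist {α : Type*} [MetricSpace α] : Closeds α → Closeds α → ℝ :=
  fun A B => Metric.hausdorffDist (A : Set α) (B : Set α)

/-- `D^{(d)}_{p,l}(f,g) = ( sup_ξ (1/l) ∫_ξ^{ξ+l} d(f t, g t)^p dt )^{1/p}`,
valued in `ℝ≥0∞`. -/
def weylD {α : Type*} (d : α → α → ℝ) (p l : ℝ) (f g : ℝ → α) : ℝ≥0∞ :=
  (⨆ ξ : ℝ, ENNReal.ofReal (1 / l) *
      ∫⁻ t in Set.Icc ξ (ξ + l), ENNReal.ofReal (d (f t) (g t) ^ p)) ^ (1 / p)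

/-- The Weyl semimetric `D^{(d)}_p(f,g) = lim_{l → +∞} D^{(d)}_{p,l}(f,g)`
(the limit exists; it is formalized here as a `limsup`). -/
def weylDinf {α : Type*} (d : α → α → ℝ) (p : ℝ) (f g : ℝ → α) : ℝ≥0∞ :=
  Filter.limsup (fun l => weylD d p l f g) Filter.atTop

/-- Membership in `M_p(ℝ, α)`: `f` is (strongly) measurable and
`sup_ξ ∫_ξ^{ξ+1} d(f t, x₀)^p dt < +∞`. -/
def MemMp {α : Type*} [TopologicalSpace α] (d : α → α → ℝ) (p : ℝ) (x₀ : α)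
    (f : ℝ → α) : Prop :=
  AEStronglyMeasurable f MeasureTheory.volume ∧
  ∃ C : ℝ, ∀ ξ : ℝ,
    (∫⁻ t in Set.Icc ξ (ξ + 1), ENNReal.ofReal (d (f t) x₀ ^ p)) ≤ ENNReal.ofReal C

/-- A set `T ⊆ ℝ` is relatively dense. -/
def RelDense (T : Set ℝ) : Prop := ∃ a > 0, ∀ ξ : ℝ, (Set.Icc ξ (ξ + a) ∩ T).Nonempty

/-- The set of `(ε, D^{(d)}_{p,l})`-almost periods of `f`. -/
def APeriodsL {α : Type*} (d : α → α → ℝ) (p l ε : ℝ) (f : ℝ → α) : Set ℝ :=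
  {τ | weylD d p l f (fun t => f (t + τ)) < ENNReal.ofReal ε}

/-- The set `P^{(d)}_p(ε; f)` of `(ε, D^{(d)}_p)`-almost periods of `f`. -/
def APeriods {α : Type*} (d : α → α → ℝ) (p ε : ℝ) (f : ℝ → α) : Set ℝ :=
  {τ | weylDinf d p f (fun t => f (t + τ)) < ENNReal.ofReal ε}

/-- Membership in the space `W_p(ℝ, α)` of Weyl almost periodic functions of order `p`
w.r.t. the distance `d` (with distinguished point `x₀`). -/
def MemWp {α : Type*} [TopologicalSpace α] (d : α → α → ℝ) (p : ℝ) (x₀ : α)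
    (f : ℝ → α) : Prop :=
  MemMp d p x₀ f ∧ ∀ ε > 0, ∃ l > 0, RelDense (APeriodsL d p l ε f)

/-- The module `Mod f`: the additive group of all `λ ∈ ℝ` such that `e^{iλτ_j} → 1`
for every `f`-returning sequence `{τ_j}` (a sequence with `D^{(d)}_1(f, f(·+τ_j)) → 0`,
where `d` is the relevant bounded distance). -/
def WMod {α : Type*} (d : α → α → ℝ) (f : ℝ → α) : Set ℝ :=
  {lam : ℝ | ∀ τ : ℕ → ℝ,
    Tendsto (fun j => weylDinf d 1 f (fun t => f (t + τ j))) atTop (nhds 0) →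
    Tendsto (fun j => Complex.exp (Complex.I * ((lam * τ j : ℝ) : ℂ))) atTop (nhds 1)}

/-- `κ_W(T) = lim_{l → +∞} sup_ξ (1/l) meas([ξ, ξ+l] ∩ T)` (formalized as a `limsup`). -/
def kappaW (T : Set ℝ) : ℝ≥0∞ :=
  Filter.limsup (fun l : ℝ => ⨆ ξ : ℝ,
    ENNReal.ofReal (1 / l) * MeasureTheory.volume (Set.Icc ξ (ξ + l) ∩ T)) Filter.atTop

/-- Membership in `M*_p(ℝ, α)`. -/
def MemMpStar {α : Type*} [TopologicalSpace α] (d : α → α → ℝ) (p : ℝ) (x₀ : α)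
    (f : ℝ → α) : Prop :=
  MemMp d p x₀ f ∧
  ∀ ε > 0, ∃ δ > 0, ∀ T : Set ℝ, MeasurableSet T → kappaW T < ENNReal.ofReal δ →
    Filter.limsup (fun l : ℝ => ⨆ ξ : ℝ, ENNReal.ofReal (1 / l) *
        ∫⁻ t in Set.Icc ξ (ξ + l) ∩ T, ENNReal.ofReal (d (f t) x₀ ^ p)) Filter.atTop
      < ENNReal.ofReal ε

/-- Distance from a point to a set w.r.t. the distance `d`, valued in `ℝ≥0∞`
(`∞` for the empty set). -/
def dInfDist {α : Type*} (d : α → α → ℝ) (x : α) (K : Set α) : ℝ≥0∞ :=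
  ⨅ y ∈ K, ENNReal.ofReal (d x y)

/-- Membership in `W̃_p(ℝ, α)`: conditions 1) (relatively dense sets of
`(ε, D^{(d)}_p)`-almost periods) and 2) (approximate compactness of values). -/
def MemWpTilde {α : Type*} [TopologicalSpace α] (d : α → α → ℝ) (p : ℝ) (x₀ : α)
    (f : ℝ → α) : Prop :=
  MemMp d p x₀ f ∧
  (∀ ε > 0, RelDense (APeriods d p ε f)) ∧
  (∀ ε > 0, ∀ δ > 0, ∃ K : Set α, IsCompact K ∧
      kappaW {t | ENNReal.ofReal ε ≤ dInfDist d (f t) K} < ENNReal.ofReal δ)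

/-- The support of a Borel measure on a topological space. -/
def measSupport {α : Type*} [TopologicalSpace α] [MeasurableSpace α]
    (μ : Measure α) : Set α :=
  {x | ∀ V : Set α, IsOpen V → x ∈ V → 0 < μ V}

/-- `r_δ(x, μ) = inf { r > 0 : μ[U_r(x)] > δ }`. -/
def rdelta {α : Type*} [PseudoMetricSpace α] [MeasurableSpace α]
    (x : α) (μ : Measure α) (δ : ℝ) : ℝ :=
  sInf {r : ℝ | 0 < r ∧ ENNReal.ofReal δ < μ (Metric.ball x r)}

/-- The Lévy–Prokhorov distance on Borel probability measures. -/
def lpDist {α : Type*} [MeasurableSpace α] [PseudoEMetricSpace α] :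
    ProbabilityMeasure α → ProbabilityMeasure α → ℝ :=
  fun μ ν => MeasureTheory.levyProkhorovDist (μ : Measure α) (ν : Measure α)

end

/-- Uniform upper-density bound. -/
def KS (T : Set ℝ) (a : ℝ) : Prop :=
  ∀ᶠ l : ℝ in atTop, ∀ ξ : ℝ, volume (Set.Icc ξ (ξ + l) ∩ T) ≤ ENNReal.ofReal (a * l)

/-- Uniform upper-mean bound. -/
def KI (φ : ℝ → ℝ≥0∞) (a : ℝ) : Prop :=
  ∀ᶠ l : ℝ in atTop, ∀ ξ : ℝ, ∫⁻ t in Set.Icc ξ (ξ + l), φ t ≤ ENNReal.ofReal (a * l)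

lemma aux_mul_le {l : ℝ} (hl : 0 < l) {v : ℝ≥0∞} {a : ℝ} :
    ENNReal.ofReal (1 / l) * v ≤ ENNReal.ofReal a ↔ v ≤ ENNReal.ofReal (a * l) := by
  have h1 : ENNReal.ofReal (1 / l) = (ENNReal.ofReal l)⁻¹ := by
    rw [one_div, ENNReal.ofReal_inv_of_pos hl]
  rw [h1, mul_comm a l, ENNReal.ofReal_mul hl.le]
  exact ENNReal.inv_mul_le_iff (by simpa using hl) (by simp)

lemma KI_of_limsup {φ : ℝ → ℝ≥0∞} {a : ℝ}
    (h : limsup (fun l : ℝ => ⨆ ξ : ℝ, ENNReal.ofReal (1 / l) *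
      ∫⁻ t in Set.Icc ξ (ξ + l), φ t) atTop < ENNReal.ofReal a) : KI φ a := by
  have h1 := eventually_lt_of_limsup_lt h
  filter_upwards [h1, eventually_gt_atTop 0] with l hl hl0 ξ
  exact (aux_mul_le hl0).1 ((le_iSup (fun ξ : ℝ => ENNReal.ofReal (1 / l) *
      ∫⁻ t in Set.Icc ξ (ξ + l), φ t) ξ).trans hl.le)

lemma KI.eventually {φ : ℝ → ℝ≥0∞} {a : ℝ} (h : KI φ a) :
    ∀ᶠ l : ℝ in atTop, (⨆ ξ : ℝ, ENNReal.ofReal (1 / l) *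
      ∫⁻ t in Set.Icc ξ (ξ + l), φ t) ≤ ENNReal.ofReal a := by
  filter_upwards [h, eventually_gt_atTop 0] with l hl hl0
  exact iSup_le fun ξ => (aux_mul_le hl0).2 (hl ξ)

lemma KS_of_kappa {T : Set ℝ} {a : ℝ} (h : kappaW T < ENNReal.ofReal a) : KS T a := by
  have h1 := eventually_lt_of_limsup_lt h
  filter_upwards [h1, eventually_gt_atTop 0] with l hl hl0 ξ
  exact (aux_mul_le hl0).1 ((le_iSup (fun ξ : ℝ => ENNReal.ofReal (1 / l) *
      volume (Set.Icc ξ (ξ + l) ∩ T)) ξ).trans hl.le)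

lemma KS.kappa_le {T : Set ℝ} {a : ℝ} (h : KS T a) : kappaW T ≤ ENNReal.ofReal a := by
  refine limsup_le_of_le (by isBoundedDefault) ?_
  filter_upwards [h, eventually_gt_atTop 0] with l hl hl0
  exact iSup_le fun ξ => (aux_mul_le hl0).2 (hl ξ)

lemma KS.kappa_lt {T : Set ℝ} {a b : ℝ} (h : KS T a) (hab : a < b) (hb : 0 < b) :
    kappaW T < ENNReal.ofReal b :=
  h.kappa_le.trans_lt ((ENNReal.ofReal_lt_ofReal_iff hb).2 hab)

lemma KS.mono {S T : Set ℝ} {a b : ℝ} (h : KS T a) (hST : S ⊆ T) (hab : a ≤ b) : KS S b := by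
  filter_upwards [h, eventually_gt_atTop 0] with l hl hl0 ξ
  refine (measure_mono (Set.inter_subset_inter_right _ hST)).trans ((hl ξ).trans ?_)
  exact ENNReal.ofReal_le_ofReal (by gcongr)

lemma KS.union {S T : Set ℝ} {a b : ℝ} (hS : KS S a) (hT : KS T b) (ha : 0 ≤ a) (hb : 0 ≤ b) :
    KS (S ∪ T) (a + b) := by
  filter_upwards [hS, hT, eventually_gt_atTop 0] with l h1 h2 hl0 ξ
  rw [Set.inter_union_distrib_left, add_mul, ENNReal.ofReal_add (by positivity) (by positivity)]
  exact (measure_union_le _ _).trans (add_le_add (h1 ξ) (h2 ξ))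

lemma KS.null {T : Set ℝ} (h : volume T = 0) {a : ℝ} : KS T a := by
  filter_upwards with l ξ
  rw [measure_mono_null Set.inter_subset_right h]; exact zero_le

lemma vol_shift (T : Set ℝ) (τ ξ l : ℝ) :
    volume (Set.Icc ξ (ξ + l) ∩ {t | t + τ ∈ T}) =
      volume (Set.Icc (ξ + τ) (ξ + τ + l) ∩ T) := by
  rw [← measure_preimage_add_right volume τ (Set.Icc (ξ + τ) (ξ + τ + l) ∩ T)]
  congr 1
  ext t
  simp only [Set.mem_inter_iff, Set.mem_Icc, Set.mem_ofPred_eq, Set.mem_preimage]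
  constructor
  · rintro ⟨⟨h1, h2⟩, h3⟩; exact ⟨⟨by linarith, by linarith⟩, h3⟩
  · rintro ⟨⟨h1, h2⟩, h3⟩; exact ⟨⟨by linarith, by linarith⟩, h3⟩

lemma KS.shift {T : Set ℝ} {a : ℝ} (h : KS T a) (τ : ℝ) : KS {t | t + τ ∈ T} a := by
  filter_upwards [h] with l hl ξ
  rw [vol_shift]; exact hl _

lemma KS.biUnion {ι : Type*} (s : Finset ι) (T : ι → Set ℝ) {a : ℝ} (ha : 0 ≤ a)
    (h : ∀ i ∈ s, KS (T i) a) : KS (⋃ i ∈ s, T i) (s.card * a) := by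
  classical
  induction s using Finset.induction_on with
  | empty => exact KS.null (by simp)
  | insert i s hi ih =>
    have h1 := (h i (by simp)).union (ih fun j hj => h j (by simp [hj])) ha (by positivity)
    refine h1.mono ?_ ?_
    · simp
    · rw [Finset.card_insert_of_notMem hi]; push_cast; linarith

lemma finite_reps {α β : Type*} (c : α → β) (A : Set α) (h : (c '' A).Finite) :
    ∃ S ⊆ A, S.Finite ∧ ∀ x ∈ A, ∃ s ∈ S, c s = c x := by
  obtain ⟨S, hSA, hS, hp⟩ := (Set.exists_subset_image_finite_and (f := c) (s := A)
    (p := fun t => t = c '' A)).1 ⟨c '' A, subset_rfl, h, rfl⟩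
  refine ⟨S, hSA, hS, fun x hx => ?_⟩
  have : c x ∈ c '' S := hp ▸ ⟨x, hx, rfl⟩
  exact this

/-- A monotone family of relatively dense sets, stable under differences. -/
structure RDFam (T : ℝ → Set ℝ) : Prop where
  mono : ∀ a b : ℝ, 0 < a → a ≤ b → T a ⊆ T b
  rd : ∀ ε > 0, RelDense (T ε)
  sub : ∀ ε > 0, ∃ ε' > 0, ∀ x ∈ T ε', ∀ y ∈ T ε', x - y ∈ T ε

lemma RelDense.mono {S T : Set ℝ} (h : RelDense S) (hST : S ⊆ T) : RelDense T := by
  obtain ⟨a, ha, h⟩ := h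
  exact ⟨a, ha, fun ξ => (h ξ).mono (Set.inter_subset_inter_right _ hST)⟩

lemma uac_norm_le (x : ℝ) : ‖(x : UnitAddCircle)‖ ≤ |x| := by
  rw [UnitAddCircle.norm_eq]
  simpa using round_le x 0

lemma RDFam.inter {T : ℝ → Set ℝ} (hT : RDFam T) (a : ℝ) :
    RDFam (fun ε => T ε ∩ {τ | ‖((a * τ : ℝ) : UnitAddCircle)‖ < ε}) where
  mono := fun x y hx hxy τ hτ => ⟨hT.mono x y hx hxy hτ.1, lt_of_lt_of_le hτ.2 hxy⟩
  sub := by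
    intro ε hε
    obtain ⟨ε', hε', h⟩ := hT.sub ε hε
    have hm : 0 < min ε' (ε / 2) := by positivity
    refine ⟨min ε' (ε / 2), hm, ?_⟩
    rintro x ⟨hx1, hx2⟩ y ⟨hy1, hy2⟩
    refine ⟨h x (hT.mono _ _ hm (min_le_left _ _) hx1) y (hT.mono _ _ hm (min_le_left _ _) hy1), ?_⟩
    simp only [Set.mem_ofPred_eq] at *
    have h1 := norm_sub_le ((a * x : ℝ) : UnitAddCircle) ((a * y : ℝ) : UnitAddCircle)
    rw [mul_sub, AddCircle.coe_sub]
    have := min_le_right ε' (ε / 2)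
    linarith
  rd := by
    intro ε hε
    obtain ⟨ε', hε', h⟩ := hT.sub ε hε
    obtain ⟨A, hA, hrd⟩ := hT.rd ε' hε'
    obtain ⟨M, hM⟩ := exists_nat_gt (1 / ε)
    have hM0 : (0 : ℝ) < M := lt_trans (by positivity) hM
    obtain ⟨S, hST, hSf, hS⟩ := finite_reps (fun τ : ℝ => ⌊M * Int.fract (a * τ)⌋) (T ε') (by
      refine (Set.finite_Icc (0 : ℤ) M).subset ?_
      rintro _ ⟨τ, _, rfl⟩
      refine ⟨Int.floor_nonneg.2 (mul_nonneg hM0.le (Int.fract_nonneg _)), ?_⟩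
      refine Int.floor_le_iff.2 ?_
      push_cast
      nlinarith [Int.fract_lt_one (a * τ)])
    obtain ⟨R, hR⟩ := hSf.isBounded.exists_norm_le
    refine ⟨2 * |R| + A, by positivity, fun ξ => ?_⟩
    obtain ⟨x, ⟨hx1, hx2⟩, hxT⟩ := hrd (ξ + |R|)
    obtain ⟨s, hs, hsx⟩ := hS x hxT
    have hsR := abs_le.1 ((hR s hs).trans (le_abs_self R))
    refine ⟨x - s, ⟨by linarith, by linarith⟩, h x hxT s (hST hs), ?_⟩
    have h2 := Int.abs_sub_lt_one_of_floor_eq_floor hsx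
    have h3 : |Int.fract (a * s) - Int.fract (a * x)| < ε := by
      rw [← mul_sub, abs_mul, abs_of_pos hM0] at h2
      have : 1 < M * ε := by
        rw [div_lt_iff₀ hε] at hM; exact hM
      nlinarith
    have h4 : ((a * (x - s) : ℝ) : UnitAddCircle) =
        ((Int.fract (a * x) - Int.fract (a * s) : ℝ) : UnitAddCircle) := by
      rw [mul_sub, AddCircle.coe_sub, AddCircle.coe_sub, AddCircle.coe_fract, AddCircle.coe_fract]
    simp only [Set.mem_ofPred_eq]
    rw [h4]
    rw [abs_sub_comm] at h3
    refine lt_of_le_of_lt ?_ h3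
    exact uac_norm_le _

/-- Amplitudes. -/
noncomputable def cc (k : ℕ) : ℝ := 1 / (2 * 16 ^ k * (k + 1).factorial)

lemma cc_pos (k : ℕ) : 0 < cc k := by unfold cc; positivity

lemma cc_succ (k : ℕ) : cc (k + 1) = cc k / (16 * (k + 2)) := by
  unfold cc
  rw [Nat.factorial_succ (k + 1), pow_succ]
  have : ((k + 1).factorial : ℝ) ≠ 0 := by positivity
  push_cast
  field_simp
  ring

lemma cc_tail_le (k j : ℕ) : cc (k + j) ≤ cc k * (1 / 2) ^ j := by
  induction j with
  | zero => simp
  | succ j ih =>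
    have h1 : cc (k + (j + 1)) ≤ cc (k + j) * (1 / 2) := by
      rw [← add_assoc, cc_succ, div_eq_mul_inv]
      have := cc_pos (k + j)
      gcongr
      rw [inv_le_comm₀ (by positivity) (by norm_num)]
      push_cast
      have : (0 : ℝ) ≤ k + j := by positivity
      linarith
    rw [pow_succ]
    linarith

lemma cc_summable (k : ℕ) : Summable (fun j => cc (k + j)) :=
  Summable.of_nonneg_of_le (fun j => (cc_pos _).le) (cc_tail_le k)
    ((summable_geometric_of_lt_one (by norm_num) (by norm_num)).mul_left _)

lemma cc_tsum_le (k : ℕ) : ∑' j, cc (k + j) ≤ 2 * cc k := by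
  have h := Summable.tsum_le_tsum (cc_tail_le k) (cc_summable k)
    ((summable_geometric_of_lt_one (by norm_num) (by norm_num)).mul_left _)
  rw [tsum_mul_left, tsum_geometric_two] at h
  linarith

lemma cc_zero : cc 0 = 1 / 2 := by simp [cc]

lemma cc_le_half (k : ℕ) : cc k ≤ 1 / 2 := by
  have := cc_tail_le 0 k
  rw [cc_zero, zero_add] at this
  have h2 : ((1 : ℝ) / 2) ^ k ≤ 1 := pow_le_one₀ (by norm_num) (by norm_num)
  linarith

/-- Norm on the circle of `a * t`. -/
noncomputable def nn (a t : ℝ) : ℝ := ‖((a * t : ℝ) : UnitAddCircle)‖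

lemma nn_nonneg (a t : ℝ) : 0 ≤ nn a t := norm_nonneg _

lemma nn_le_half (a t : ℝ) : nn a t ≤ 1 / 2 := by
  unfold nn
  rw [UnitAddCircle.norm_eq]; exact abs_sub_round _

lemma nn_sub (a t τ : ℝ) : |nn a (t + τ) - nn a t| ≤ nn a τ := by
  unfold nn
  have := abs_norm_sub_norm_le ((a * (t + τ) : ℝ) : UnitAddCircle) ((a * t : ℝ) : UnitAddCircle)
  rwa [← AddCircle.coe_sub, show a * (t + τ) - a * t = a * τ by ring] at this

lemma nn_cont (a : ℝ) : Continuous (nn a) := by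
  unfold nn
  exact continuous_norm.comp ((AddCircle.continuous_mk' 1).comp (continuous_const.mul continuous_id))

/-- The perturbation function. -/
noncomputable def piF (a : ℕ → ℝ) (t : ℝ) : ℝ := 1 / 2 + ∑' k, cc k * nn (a k) t

lemma term_le (a : ℕ → ℝ) (t : ℝ) (k : ℕ) : cc k * nn (a k) t ≤ cc k * (1 / 2) :=
  mul_le_mul_of_nonneg_left (nn_le_half _ _) (cc_pos k).le

lemma term_nonneg (a : ℕ → ℝ) (t : ℝ) (k : ℕ) : 0 ≤ cc k * nn (a k) t :=
  mul_nonneg (cc_pos k).le (nn_nonneg _ _)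

lemma cc_summable0 : Summable cc := by simpa using cc_summable 0

lemma term_summable (a : ℕ → ℝ) (t : ℝ) : Summable (fun k => cc k * nn (a k) t) :=
  Summable.of_nonneg_of_le (term_nonneg a t) (term_le a t) (cc_summable0.mul_right _)

lemma piF_tail (a : ℕ → ℝ) (t : ℝ) (k : ℕ) :
    ∃ r, 0 ≤ r ∧ r ≤ cc k ∧ piF a t = 1 / 2 + ∑ j ∈ Finset.range k, cc j * nn (a j) t + r := by
  have hs := term_summable a t
  have h2 := (summable_nat_add_iff k).2 hs
  refine ⟨∑' j, cc (j + k) * nn (a (j + k)) t, tsum_nonneg fun j => term_nonneg a t _, ?_, ?_⟩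
  · have h3 : Summable (fun j => cc (j + k) * (1 / 2)) :=
      ((summable_nat_add_iff k).2 cc_summable0).mul_right _
    refine (Summable.tsum_le_tsum (fun j => term_le a t _) h2 h3).trans ?_
    rw [tsum_mul_right]
    have := cc_tsum_le k
    simp_rw [add_comm k] at this
    linarith
  · unfold piF
    rw [← hs.sum_add_tsum_nat_add k]; ring

lemma piF_lower (a : ℕ → ℝ) (t : ℝ) : 1 / 2 ≤ piF a t := by
  obtain ⟨r, h1, h2, h3⟩ := piF_tail a t 0
  simp at h3; linarith

lemma piF_upper (a : ℕ → ℝ) (t : ℝ) : piF a t ≤ 1 := by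
  obtain ⟨r, h1, h2, h3⟩ := piF_tail a t 0
  rw [cc_zero] at h2
  simp at h3; linarith

lemma piF_cont (a : ℕ → ℝ) : Continuous (piF a) := by
  unfold piF
  refine continuous_const.add (continuous_tsum (fun k => continuous_const.mul (nn_cont _))
    (cc_summable0.mul_right (1 / 2)) fun k t => ?_)
  rw [Real.norm_of_nonneg (term_nonneg a t k)]; exact term_le a t k

lemma part_diff (a : ℕ → ℝ) (k : ℕ) (τ e : ℝ) (he : 0 ≤ e) (h : ∀ j < k, nn (a j) τ < e) (t : ℝ) :
    |∑ j ∈ Finset.range k, cc j * nn (a j) (t + τ) - ∑ j ∈ Finset.range k, cc j * nn (a j) t| ≤ e := by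
  rw [← Finset.sum_sub_distrib]
  refine (Finset.abs_sum_le_sum_abs _ _).trans ?_
  have h1 : ∀ j ∈ Finset.range k, |cc j * nn (a j) (t + τ) - cc j * nn (a j) t| ≤ cc j * e := by
    intro j hj
    rw [← mul_sub, abs_mul, abs_of_pos (cc_pos j)]
    exact mul_le_mul_of_nonneg_left ((nn_sub _ _ _).trans (h j (Finset.mem_range.1 hj)).le) (cc_pos j).le
  refine (Finset.sum_le_sum h1).trans ?_
  rw [← Finset.sum_mul]
  have h2 : ∑ j ∈ Finset.range k, cc j ≤ 1 := by
    refine (cc_summable0.sum_le_tsum _ fun j _ => (cc_pos j).le).trans ?_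
    have := cc_tsum_le 0
    simp [cc_zero] at this
    simpa using this
  nlinarith

lemma piF_diff (a : ℕ → ℝ) (ε : ℝ) (hε : 0 < ε) :
    ∃ k, ∃ e > 0, ∀ τ, (∀ j < k, nn (a j) τ < e) → ∀ t, |piF a (t + τ) - piF a t| < ε := by
  have ht : Tendsto cc atTop (𝓝 0) := cc_summable0.tendsto_atTop_zero
  obtain ⟨k, hk⟩ := (ht.eventually (gt_mem_nhds (by positivity : 0 < ε / 2))).exists
  refine ⟨k, ε / 2, by positivity, fun τ hτ t => ?_⟩
  obtain ⟨r, h1, h2, h3⟩ := piF_tail a t k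
  obtain ⟨r', h1', h2', h3'⟩ := piF_tail a (t + τ) k
  have := abs_le.1 (part_diff a k τ (ε / 2) (by positivity) hτ t)
  rw [h3, h3', abs_lt]
  constructor <;> linarith

lemma rec_seq (R : ℕ → (ℕ → ℝ) → ℝ → Prop)
    (hloc : ∀ n a b x, (∀ k < n, a k = b k) → R n a x → R n b x)
    (hex : ∀ n a, ∃ x, R n a x) : ∃ a : ℕ → ℝ, ∀ n, R n a (a n) := by
  choose X hX using hex
  let s : ℕ → (ℕ → ℝ) := fun n => Nat.rec (fun _ => 0) (fun n s => Function.update s n (X n s)) n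
  have hs : ∀ n, s (n + 1) = Function.update (s n) n (X n (s n)) := fun n => rfl
  have h1 : ∀ m k n, k < n → s (n + m) k = s n k := by
    intro m k n hk
    induction m with
    | zero => rfl
    | succ m ih =>
      rw [← add_assoc, hs, Function.update_of_ne (by omega), ih]
  refine ⟨fun n => s (n + 1) n, fun n => ?_⟩
  have h2 : s (n + 1) n = X n (s n) := by rw [hs, Function.update_self]
  change R n (fun n => s (n + 1) n) (s (n + 1) n)
  rw [h2]
  refine hloc n (s n) _ _ (fun k hk => ?_) (hX n (s n))
  obtain ⟨m, rfl⟩ := Nat.exists_eq_add_of_lt hk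
  have := h1 m k (k + 1) (by omega)
  have e : k + m + 1 = k + 1 + m := by omega
  rw [e]
  exact this

lemma count_le (N : ℕ) (A : ℕ → Set ℝ) (hA : ∀ i, NullMeasurableSet (A i)) (W : Set ℝ)
    (m : ℕ) (h : ∀ t, ∀ s : Finset ℕ, (∀ i ∈ s, i < N ∧ t ∈ A i) → s.card ≤ m) :
    ∑ i ∈ Finset.range N, volume (W ∩ A i) ≤ m * volume W := by
  classical
  have h1 : ∀ i, volume (W ∩ A i) ≤ ∫⁻ t in W, (A i).indicator 1 t := by
    intro i
    rw [lintegral_indicator_one₀ ((hA i).mono_ac Measure.restrict_le_self.absolutelyContinuous)]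
    rw [Set.inter_comm]
    exact Measure.le_restrict_apply _ _
  calc _ ≤ ∑ i ∈ Finset.range N, ∫⁻ t in W, (A i).indicator 1 t := Finset.sum_le_sum fun i _ => h1 i
    _ = ∫⁻ t in W, ∑ i ∈ Finset.range N, (A i).indicator 1 t := by
        rw [lintegral_finsetSum']
        intro i _
        exact (aemeasurable_one.indicator₀
          ((hA i).mono_ac Measure.restrict_le_self.absolutelyContinuous))
    _ ≤ ∫⁻ t in W, (m : ℝ≥0∞) := by
        refine lintegral_mono fun t => ?_
        have := h t ((Finset.range N).filter (fun i => t ∈ A i)) (by simp)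
        have h2 : ∑ i ∈ Finset.range N, (A i).indicator (1 : ℝ → ℝ≥0∞) t =
          (((Finset.range N).filter (fun i => t ∈ A i)).card : ℝ≥0∞) := by
          simp [Set.indicator_apply]
        rw [h2]
        exact (Nat.cast_le (α := ℝ≥0∞)).2 this
    _ = m * volume W := by simp

lemma sep_count (N : ℕ) (x r ρ : ℝ) (u : ℕ → ℝ)
    (hsep : ∀ i < N, ∀ j < N, i ≠ j → 2 * ρ ≤ ‖((u i - u j : ℝ) : UnitAddCircle)‖)
    (s : Finset ℕ) (hs : ∀ i ∈ s, i < N ∧ |‖((x + u i : ℝ) : UnitAddCircle)‖ - r| < ρ) :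
    s.card ≤ 2 := by
  classical
  let y : ℕ → ℝ := fun i => (x + u i) - round (x + u i)
  have hy : ∀ i, ‖((x + u i : ℝ) : UnitAddCircle)‖ = |y i| := fun i => UnitAddCircle.norm_eq
  have key : ∀ i j, ‖((u i - u j : ℝ) : UnitAddCircle)‖ ≤ |y i - y j| := by
    intro i j
    rw [UnitAddCircle.norm_eq]
    have := round_le (u i - u j) (round (x + u i) - round (x + u j))
    refine this.trans (le_of_eq ?_)
    simp only [y]; push_cast; congr 1; ring
  rw [← Finset.card_filter_add_card_filter_not (s := s) (fun i => 0 ≤ y i)]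
  have c1 : (s.filter (fun i => 0 ≤ y i)).card ≤ 1 := by
    rw [Finset.card_le_one]
    intro i hi j hj
    rw [Finset.mem_filter] at hi hj
    by_contra hij
    have h1 := hsep i (hs i hi.1).1 j (hs j hj.1).1 hij
    have h2 := (hs i hi.1).2
    have h3 := (hs j hj.1).2
    rw [hy, abs_of_nonneg hi.2, abs_lt] at h2
    rw [hy, abs_of_nonneg hj.2, abs_lt] at h3
    have : |y i - y j| < 2 * ρ := abs_lt.2 ⟨by linarith, by linarith⟩
    linarith [key i j]
  have c2 : (s.filter (fun i => ¬ 0 ≤ y i)).card ≤ 1 := by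
    rw [Finset.card_le_one]
    intro i hi j hj
    rw [Finset.mem_filter, not_le] at hi hj
    by_contra hij
    have h1 := hsep i (hs i hi.1).1 j (hs j hj.1).1 hij
    have h2 := (hs i hi.1).2
    have h3 := (hs j hj.1).2
    rw [hy, abs_of_neg hi.2, abs_lt] at h2
    rw [hy, abs_of_neg hj.2, abs_lt] at h3
    have : |y i - y j| < 2 * ρ := abs_lt.2 ⟨by linarith, by linarith⟩
    linarith [key i j]
  omega

lemma sep_norm (N : ℕ) (u : ℕ → ℝ)
    (hu : ∀ i < N, (i : ℝ) / N ≤ u i ∧ u i ≤ i / N + 1 / (2 * N)) :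
    ∀ i < N, ∀ j < N, i ≠ j → 1 / (2 * N) ≤ ‖((u i - u j : ℝ) : UnitAddCircle)‖ := by
  have main : ∀ i < N, ∀ j < N, j < i → 1 / (2 * N) ≤ ‖((u i - u j : ℝ) : UnitAddCircle)‖ := by
    intro i hi j hj hij
    have hN : (0 : ℝ) < N := by exact_mod_cast (by omega : 0 < N)
    obtain ⟨h1, h2⟩ := hu i hi
    obtain ⟨h3, h4⟩ := hu j hj
    have e1 : (j : ℝ) / N + 1 / N ≤ i / N := by
      rw [← add_div]; gcongr; exact_mod_cast hij
    have e2 : (i : ℝ) / N + 1 / N ≤ 1 := by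
      rw [← add_div, div_le_one hN]; exact_mod_cast hi
    have e3 : (0 : ℝ) ≤ j / N := by positivity
    have e4 : (1 : ℝ) / N = 2 * (1 / (2 * N)) := by field_simp
    rw [UnitAddCircle.norm_eq]
    generalize round (u i - u j) = n
    rcases le_or_gt n 0 with hn | hn
    · have : (n : ℝ) ≤ 0 := by exact_mod_cast hn
      rw [le_abs]; left; linarith
    · have : (1 : ℝ) ≤ n := by exact_mod_cast hn
      rw [le_abs]; right; linarith
  intro i hi j hj hij
  rcases lt_or_gt_of_ne hij with h | h
  · have := main j hj i hi h
    rwa [← norm_neg, ← AddCircle.coe_neg, neg_sub] at this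
  · exact main i hi j hj h

/-- Almost periods in density. -/
def Tp (Δ : ℝ → ℝ → ℝ) (ε : ℝ) : Set ℝ := {τ | KS {t | ε ≤ Δ t (t + τ)} ε}

/-- Common almost periods. -/
def Tk (Δ : ℝ → ℝ → ℝ) (a : ℕ → ℝ) (k : ℕ) (ε : ℝ) : Set ℝ :=
  {τ | τ ∈ Tp Δ ε ∧ ∀ j < k, nn (a j) τ < ε}

lemma Tp_fam (Δ : ℝ → ℝ → ℝ) (hsymm : ∀ t s, Δ t s = Δ s t)
    (htri : ∀ t s r, Δ t r ≤ Δ t s + Δ s r) (hrd : ∀ ε > 0, RelDense (Tp Δ ε)) :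
    RDFam (Tp Δ) where
  mono := by
    intro x y hx hxy τ hτ
    exact KS.mono hτ (fun t ht => le_trans hxy ht) hxy
  rd := hrd
  sub := by
    intro ε hε
    refine ⟨ε / 2, by positivity, fun x hx y hy => ?_⟩
    have h1 := (KS.shift hx (-y)).union (KS.shift hy (-y)) (by positivity) (by positivity)
    refine h1.mono ?_ (by linarith)
    intro t ht
    by_contra hcon
    simp only [Set.mem_union, Set.mem_ofPred_eq, not_or, not_le] at hcon ht
    have h2 := htri t (t + -y) (t + (x - y))
    have h3 := hcon.1
    have h4 := hcon.2
    rw [show t + -y + x = t + (x - y) by ring] at h3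
    rw [show t + -y + y = t by ring, hsymm] at h4
    linarith

lemma Tk_fam (Δ : ℝ → ℝ → ℝ) (h : RDFam (Tp Δ)) (a : ℕ → ℝ) (k : ℕ) : RDFam (Tk Δ a k) := by
  induction k with
  | zero =>
    convert h using 2 with ε
    ext τ; simp [Tk]
  | succ k ih =>
    have := ih.inter (a k)
    convert this using 2 with ε
    ext τ
    simp only [Tk, Set.mem_ofPred_eq, Set.mem_inter_iff, nn, and_assoc]
    constructor
    · rintro ⟨h1, h2⟩
      exact ⟨h1, fun j hj => h2 j (by omega), h2 k (by omega)⟩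
    · rintro ⟨h1, h2, h3⟩
      refine ⟨h1, fun j hj => ?_⟩
      rcases Nat.lt_succ_iff_lt_or_eq.1 hj with hj | rfl
      · exact h2 j hj
      · exact h3

/-- The precision at step `k`. -/
noncomputable def ek (k : ℕ) : ℝ := cc k / (16 * (k + 1))

/-- Step condition. -/
def Rcond (Δ : ℝ → ℝ → ℝ) (M : Set ℝ) (k : ℕ) (a : ℕ → ℝ) (x : ℝ) : Prop :=
  x ∈ M ∧ 0 < x ∧ ∃ A > 0, (∀ ξ : ℝ, (Set.Icc ξ (ξ + A) ∩ Tk Δ a k (ek k / (k + 1))).Nonempty) ∧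
    x * A ≤ 1 / (2 * (k + 1))

lemma ek_pos (k : ℕ) : 0 < ek k := by
  unfold ek; have := cc_pos k; positivity

lemma exists_freq (Δ : ℝ → ℝ → ℝ) (h : RDFam (Tp Δ)) (M : Set ℝ)
    (hM : ∀ η > 0, ∃ x ∈ M, 0 < x ∧ x < η) : ∃ a : ℕ → ℝ, ∀ k, Rcond Δ M k a (a k) := by
  refine rec_seq (Rcond Δ M) ?_ ?_
  · rintro n a b x hab ⟨h1, h2, A, hA, h3, h4⟩
    refine ⟨h1, h2, A, hA, fun ξ => (h3 ξ).mono (Set.inter_subset_inter_right _ ?_), h4⟩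
    rintro τ ⟨h5, h6⟩
    exact ⟨h5, fun j hj => hab j hj ▸ h6 j hj⟩
  · intro n a
    have he : 0 < ek n / (n + 1) := by have := ek_pos n; positivity
    obtain ⟨A, hA, h3⟩ := (Tk_fam Δ h a n).rd _ he
    obtain ⟨x, hx, hx0, hx1⟩ := hM (1 / (2 * (n + 1)) / A) (by positivity)
    refine ⟨x, hx, hx0, A, hA, h3, ?_⟩
    rw [lt_div_iff₀ hA] at hx1
    exact hx1.le

lemma vol_edge (E : Set ℝ) (τ ξ l : ℝ) (hτ : 0 ≤ τ) :
    volume (Set.Icc ξ (ξ + l) ∩ E) ≤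
      volume (Set.Icc ξ (ξ + l) ∩ {t | t + τ ∈ E}) + ENNReal.ofReal τ := by
  rw [vol_shift]
  have h1 : Set.Icc ξ (ξ + l) ∩ E ⊆ (Set.Icc (ξ + τ) (ξ + τ + l) ∩ E) ∪ Set.Icc ξ (ξ + τ) := by
    rintro t ⟨⟨h1, h2⟩, h3⟩
    rcases le_or_gt (ξ + τ) t with h | h
    · left; exact ⟨⟨h, by linarith⟩, h3⟩
    · right; exact ⟨h1, h.le⟩
  refine (measure_mono h1).trans ((measure_union_le _ _).trans ?_)
  gcongr
  rw [Real.volume_Icc]; simp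

lemma anti_conc (Δ : ℝ → ℝ → ℝ)
    (hmeas : ∀ ε τ, NullMeasurableSet {t | ε ≤ Δ t (t + τ)}) (M : Set ℝ)
    (a : ℕ → ℝ) (ha : ∀ k, Rcond Δ M k a (a k))
    (ψ : ℝ → ℝ) (hψ : AEMeasurable ψ) (L : ℝ)
    (hL : ∀ η, 0 < η → η < 1 → ∀ t s, Δ t s < η → |ψ t - ψ s| ≤ L * η) (σ : ℝ) (hσ : 0 < σ) :
    ∃ ε > 0, KS {t | |ψ t - piF a t| < ε} σ := by
  obtain ⟨k, hk⟩ := exists_nat_gt (max L (4 / σ))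
  have hkL : L ≤ k + 1 := by linarith [le_max_left L (4 / σ)]
  have hkσ : 4 / (k + 1) ≤ σ := by
    have h1 : 4 / σ < k := lt_of_le_of_lt (le_max_right _ _) hk
    rw [div_lt_iff₀ hσ] at h1
    rw [div_le_iff₀ (by positivity)]
    nlinarith
  obtain ⟨haM, hak, A, hA, hrd, haA⟩ := ha k
  set N : ℕ := k + 1 with hN
  have hNr : ((N : ℕ) : ℝ) = k + 1 := by rw [hN]; push_cast; ring
  rw [← hNr] at hkL hkσ haA hrd
  have hN0 : (0 : ℝ) < N := by rw [hNr]; positivity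
  have hN1 : (1 : ℝ) ≤ N := by rw [hNr]; linarith [Nat.cast_nonneg (α := ℝ) k]
  set e := ek k / N with he
  have hek := ek_pos k
  have hek2 : ek k * (16 * N) = cc k := by
    unfold ek; rw [hNr]; field_simp
  have he0 : 0 < e := by positivity
  have heN : e * N = ek k := by rw [he]; field_simp
  have hcc := cc_le_half k
  have hcp := cc_pos k
  have hek1 : ek k ≤ 1 / 32 := by nlinarith
  have he1 : e ≤ ek k := by nlinarith
  have hNe : N * e ≤ 1 := by linarith
  refine ⟨ek k, hek, ?_⟩
  choose τ hτ using fun i : ℕ => hrd (i / N / a k)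
  have hu : ∀ i < N, (i : ℝ) / N ≤ a k * τ i ∧ a k * τ i ≤ i / N + 1 / (2 * N) := by
    intro i _
    obtain ⟨⟨h1, h2⟩, _⟩ := hτ i
    have e1 : a k * (i / N / a k) = i / N := by field_simp
    constructor
    · rw [← e1]; gcongr
    · calc a k * τ i ≤ a k * (i / N / a k + A) := by gcongr
        _ = i / N + a k * A := by rw [mul_add, e1]
        _ ≤ _ := by gcongr
  have hsep := sep_norm N (fun i => a k * τ i) hu
  have hτ0 : ∀ i, 0 ≤ τ i := fun i => le_trans (by positivity) (hτ i).1.1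
  set E : Set ℝ := {t | |ψ t - piF a t| < ek k} with hE
  set B : ℕ → Set ℝ := fun i => {t | e ≤ Δ t (t + τ i)} with hB
  have hEm : NullMeasurableSet E :=
    nullMeasurableSet_lt (hψ.sub (piF_cont a).measurable.aemeasurable).abs aemeasurable_const
  have hEs : ∀ i, NullMeasurableSet {t | t + τ i ∈ E} := fun i =>
    hEm.preimage (quasiMeasurePreserving_add_right volume (τ i))
  have hBk : ∀ i, KS (B i) e := fun i => (hτ i).2.1
  have hcount : ∀ t, ∀ s : Finset ℕ, (∀ i ∈ s, i < N ∧ t ∈ {t | t + τ i ∈ E} \ B i) → s.card ≤ 2 := by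
    intro t s hs
    refine sep_count N (a k * t) ((ψ t - 1 / 2 - ∑ j ∈ Finset.range k, cc j * nn (a j) t) / cc k)
      (1 / (4 * N)) (fun i => a k * τ i) ?_ s ?_
    · intro i hi j hj hij
      refine le_trans (le_of_eq ?_) (hsep i hi j hj hij)
      field_simp; norm_num
    · intro i hi
      obtain ⟨h1, h2, h3⟩ := hs i hi
      refine ⟨h1, ?_⟩
      simp only [hE, hB, Set.mem_ofPred_eq, not_le] at h2 h3
      have h4 := hL e he0 (by linarith) _ _ h3
      have h5 := part_diff a k (τ i) e he0.le (hτ i).2.2 t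
      obtain ⟨r, r0, r1, hr⟩ := piF_tail a (t + τ i) (k + 1)
      rw [Finset.sum_range_succ] at hr
      have h6 : cc (k + 1) ≤ ek k := by
        rw [cc_succ]; unfold ek
        gcongr
        linarith
      have h7 : L * e ≤ ek k := by rw [← heN, mul_comm]; gcongr
      have hnn : ‖((a k * t + a k * τ i : ℝ) : UnitAddCircle)‖ = nn (a k) (t + τ i) := by
        unfold nn; rw [mul_add]
      have e1 : nn (a k) (t + τ i) - (ψ t - 1 / 2 - ∑ j ∈ Finset.range k, cc j * nn (a j) t) / cc k
        = (cc k * nn (a k) (t + τ i) - (ψ t - 1 / 2 - ∑ j ∈ Finset.range k, cc j * nn (a j) t)) / cc k := by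
        field_simp
      simp only [hnn]
      rw [e1, abs_div, abs_of_pos hcp, div_lt_iff₀ hcp]
      have e2 : 1 / (4 * N) * cc k = 4 * ek k := by rw [← hek2]; field_simp; norm_num
      rw [e2]
      rw [abs_le] at h4 h5
      rw [abs_lt] at h2 ⊢
      rw [hr] at h2
      constructor <;> linarith
  set R : ℝ := ∑ i ∈ Finset.range N, τ i with hR
  have hR0 : 0 ≤ R := Finset.sum_nonneg fun i _ => hτ0 i
  have hall : ∀ᶠ l : ℝ in atTop, ∀ i ∈ Finset.range N, ∀ ξ : ℝ,
      volume (Set.Icc ξ (ξ + l) ∩ B i) ≤ ENNReal.ofReal (e * l) :=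
    (Filter.eventually_all_finset _).2 fun i _ => hBk i
  filter_upwards [hall, eventually_ge_atTop R, eventually_gt_atTop 0] with l hl hlR hl0 ξ
  set W := Set.Icc ξ (ξ + l) with hW
  have hWv : volume W = ENNReal.ofReal l := by rw [hW, Real.volume_Icc]; simp
  have step : ∀ i ∈ Finset.range N, volume (W ∩ E) ≤ volume (W ∩ ({t | t + τ i ∈ E} \ B i)) +
      ENNReal.ofReal (e * l) + ENNReal.ofReal (τ i) := by
    intro i hi
    refine (vol_edge E (τ i) ξ l (hτ0 i)).trans ?_
    gcongr
    refine le_trans ?_ (add_le_add le_rfl (hl i hi ξ))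
    refine (measure_mono ?_).trans (measure_union_le _ _)
    rintro t ⟨h1, h2⟩
    by_cases h3 : t ∈ B i
    · right; exact ⟨h1, h3⟩
    · left; exact ⟨h1, h2, h3⟩
  have hs := Finset.sum_le_sum step
  rw [Finset.sum_add_distrib, Finset.sum_add_distrib] at hs
  have hc := count_le N (fun i => {t | t + τ i ∈ E} \ B i)
    (fun i => (hEs i).diff (hmeas e (τ i))) W 2 hcount
  have hs2 : (N : ℝ≥0∞) * volume (W ∩ E) ≤ ENNReal.ofReal (4 * l) := by
    calc (N : ℝ≥0∞) * volume (W ∩ E) = ∑ i ∈ Finset.range N, volume (W ∩ E) := by simp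
      _ ≤ _ := hs
      _ ≤ ENNReal.ofReal (2 * l) + ENNReal.ofReal l + ENNReal.ofReal R := by
          gcongr
          · refine hc.trans (le_of_eq ?_)
            rw [hWv, ENNReal.ofReal_mul (by norm_num)]; simp
          · rw [Finset.sum_const, Finset.card_range, nsmul_eq_mul, ← ENNReal.ofReal_natCast,
              ← ENNReal.ofReal_mul (by positivity)]
            apply ENNReal.ofReal_le_ofReal
            nlinarith
          · rw [hR, ENNReal.ofReal_sum_of_nonneg fun i _ => hτ0 i]
      _ = ENNReal.ofReal (2 * l + l + R) := by
          rw [ENNReal.ofReal_add (by positivity) hR0, ENNReal.ofReal_add (by positivity) hl0.le]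
      _ ≤ _ := ENNReal.ofReal_le_ofReal (by linarith)
  have : volume (W ∩ E) ≤ ENNReal.ofReal (4 * l) / N := by
    rw [ENNReal.le_div_iff_mul_le (Or.inl (by simp [hN])) (Or.inl (by simp)), mul_comm]; exact hs2
  refine this.trans ?_
  rw [← ENNReal.ofReal_natCast, ← ENNReal.ofReal_div_of_pos hN0]
  apply ENNReal.ofReal_le_ofReal
  calc 4 * l / N = 4 / N * l := by ring
    _ ≤ σ * l := by gcongr

/-- Almost periods of the data together with the perturbation. -/
def PP (Δ : ℝ → ℝ → ℝ) (a : ℕ → ℝ) (ε : ℝ) : Set ℝ :=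
  {τ | τ ∈ Tp Δ ε ∧ ∀ t, |piF a (t + τ) - piF a t| < ε}

lemma PP_mono (Δ : ℝ → ℝ → ℝ) (a : ℕ → ℝ) {x y : ℝ} (hxy : x ≤ y) : PP Δ a x ⊆ PP Δ a y :=
  fun _ hτ => ⟨KS.mono hτ.1 (fun _ ht => le_trans hxy ht) hxy, fun t => (hτ.2 t).trans_le hxy⟩

lemma PP_of_Tk (Δ : ℝ → ℝ → ℝ) (a : ℕ → ℝ) (ε : ℝ) (hε : 0 < ε) :
    ∃ k, ∃ e > 0, Tk Δ a k e ⊆ PP Δ a ε := by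
  obtain ⟨k, e, he, h⟩ := piF_diff a ε hε
  refine ⟨k, min e ε, by positivity, ?_⟩
  rintro τ ⟨h1, h2⟩
  refine ⟨KS.mono h1 (fun t (ht : ε ≤ Δ t (t + τ)) =>
    show min e ε ≤ Δ t (t + τ) from (min_le_right e ε).trans ht) (min_le_right _ _), ?_⟩
  exact h τ fun j hj => (h2 j hj).trans_le (min_le_left _ _)

/-- Almost periodic sets. -/
def StabSet (P : ℝ → Set ℝ) (Q : Set ℝ) : Prop :=
  ∀ σ > 0, ∃ ε > 0, ∀ τ ∈ P ε, KS {t | ¬ (t ∈ Q ↔ t + τ ∈ Q)} σ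

/-- Almost periodic index functions. -/
def StabIdx (P : ℝ → Set ℝ) (i : ℝ → ℕ) : Prop :=
  ∀ σ > 0, ∃ ε > 0, ∀ τ ∈ P ε, KS {t | i t ≠ i (t + τ)} σ

/-- Tight index functions. -/
def TightIdx (i : ℝ → ℕ) : Prop := ∀ σ > 0, ∃ N, KS {t | N < i t} σ

lemma stab_lt (Δ : ℝ → ℝ → ℝ)
    (hmeas : ∀ ε τ, NullMeasurableSet {t | ε ≤ Δ t (t + τ)}) (M : Set ℝ)
    (a : ℕ → ℝ) (ha : ∀ k, Rcond Δ M k a (a k))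
    (ψ : ℝ → ℝ) (hψ : AEMeasurable ψ) (L : ℝ)
    (hL : ∀ η, 0 < η → η < 1 → ∀ t s, Δ t s < η → |ψ t - ψ s| ≤ L * η) (c : ℝ) (hc : 0 < c) :
    StabSet (PP Δ a) {t | ψ t < c * piF a t} := by
  intro σ hσ
  have hL' : ∀ η, 0 < η → η < 1 → ∀ t s, Δ t s < η → |ψ t / c - ψ s / c| ≤ |L / c| * η := by
    intro η h1 h2 t s h3
    rw [← sub_div, abs_div, abs_div, abs_of_pos hc, div_mul_eq_mul_div]
    gcongr
    exact (hL η h1 h2 t s h3).trans (by gcongr; exact le_abs_self L)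
  obtain ⟨ε0, hε0, hK⟩ := anti_conc Δ hmeas M a ha (fun t => ψ t / c) (hψ.div_const c) |L / c| hL'
    (σ / 2) (by positivity)
  set B := |L / c| with hB
  have hB0 : 0 ≤ B := abs_nonneg _
  set ε := min (min (1 / 2) (σ / 2)) (ε0 / (2 * (B + 1))) with hε
  have h1 : ε ≤ 1 / 2 := (min_le_left _ _).trans (min_le_left _ _)
  have h2 : ε ≤ σ / 2 := (min_le_left _ _).trans (min_le_right _ _)
  have h3 : ε ≤ ε0 / (2 * (B + 1)) := min_le_right _ _
  have h0 : 0 < ε := by positivity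
  rw [le_div_iff₀ (by positivity)] at h3
  refine ⟨ε, h0, fun τ hτ => ?_⟩
  have hu := (KS.mono hτ.1 (subset_refl _) h2).union hK (by positivity) (by positivity)
  refine hu.mono ?_ (by linarith)
  intro t ht
  by_contra hcon
  simp only [Set.mem_union, Set.mem_ofPred_eq, not_or, not_le, not_lt] at hcon ht
  have h4 := abs_le.1 (hL' ε h0 (by linarith) _ _ hcon.1)
  have h5 := abs_lt.1 (hτ.2 t)
  have e1 : ∀ t, ψ t < c * piF a t ↔ ψ t / c - piF a t < 0 := by
    intro t
    rw [sub_neg, div_lt_iff₀ hc, mul_comm]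
  apply ht
  rw [e1, e1]
  rcases le_abs.1 hcon.2 with h | h
  · constructor <;> intro h' <;> nlinarith
  · constructor <;> intro h' <;> nlinarith

lemma StabIdx_step (P : ℝ → Set ℝ) (hP : ∀ x y : ℝ, x ≤ y → P x ⊆ P y) (Q : ℕ → ℕ → Set ℝ)
    (hQ : ∀ j k, StabSet P (Q j k)) (i i' : ℝ → ℕ) (hi' : ∀ t, i' t = sInf {k | t ∈ Q (i t) k})
    (G : Set ℝ) (hG : volume Gᶜ = 0) (hne : ∀ t ∈ G, ∃ k, t ∈ Q (i t) k)
    (hs : StabIdx P i) (ht : TightIdx i) (ht' : TightIdx i') : StabIdx P i' := by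
  classical
  intro σ hσ
  obtain ⟨ε1, hε1, h1⟩ := hs (σ / 4) (by positivity)
  obtain ⟨N, hN⟩ := ht (σ / 4) (by positivity)
  obtain ⟨N', hN'⟩ := ht' (σ / 4) (by positivity)
  set S := Finset.range (N + 1) ×ˢ Finset.range (N' + 1) with hS
  have hSc : 0 < (S.card : ℝ) := by
    rw [hS, Finset.card_product]; simp; positivity
  choose e he hee using fun q : ℕ × ℕ => hQ q.1 q.2 (σ / 4 / S.card) (by positivity)
  obtain ⟨ε2, hε2, h2⟩ : ∃ ε2 > 0, ∀ q ∈ S, ε2 ≤ e q := by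
    have hSne : S.Nonempty := Finset.card_pos.1 (by exact_mod_cast hSc)
    refine ⟨S.inf' hSne e, ?_, fun q hq => Finset.inf'_le _ hq⟩
    exact (Finset.lt_inf'_iff _).2 fun q _ => he q
  refine ⟨min ε1 ε2, by positivity, fun τ hτ => ?_⟩
  have k1 := h1 τ (hP _ _ (min_le_left _ _) hτ)
  have k2 := KS.biUnion S (fun q => {t | ¬ (t ∈ Q q.1 q.2 ↔ t + τ ∈ Q q.1 q.2)}) (by positivity)
    fun q hq => hee q τ (hP _ _ ((min_le_right _ _).trans (h2 q hq)) hτ)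
  have k3 : KS Gᶜ 0 := KS.null hG
  have e1 : (S.card : ℝ) * (σ / 4 / S.card) = σ / 4 := by field_simp
  rw [e1] at k2
  have k := (((k1.union hN (by positivity) (by positivity)).union hN' (by positivity)
    (by positivity)).union k2 (by positivity) (by positivity)).union k3 (by positivity) le_rfl
  refine k.mono ?_ (by linarith)
  intro t htt
  by_contra hcon
  simp only [Set.mem_union, Set.mem_ofPred_eq, not_or, not_not, not_lt, Set.mem_compl_iff,
    Set.mem_iUnion, not_exists] at hcon
  obtain ⟨⟨⟨⟨c1, c2⟩, c3⟩, c4⟩, c5⟩ := hcon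
  apply htt
  have hmem : t ∈ Q (i t) (i' t) := by
    rw [hi']; exact Nat.sInf_mem (s := {k | t ∈ Q (i t) k}) (hne t c5)
  have hag : ∀ k ≤ N', (t ∈ Q (i t) k ↔ t + τ ∈ Q (i t) k) := fun k hk =>
    c4 (i t, k) (by simp [hS]; omega)
  have hle : i' (t + τ) ≤ i' t := by
    rw [hi' (t + τ)]
    refine Nat.sInf_le ?_
    change t + τ ∈ Q (i (t + τ)) (i' t)
    rw [← c1]; exact (hag _ c3).1 hmem
  have hmem2 : t + τ ∈ Q (i (t + τ)) (i' (t + τ)) := by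
    rw [hi' (t + τ)]
    refine Nat.sInf_mem (s := {k | t + τ ∈ Q (i (t + τ)) k}) ⟨i' t, ?_⟩
    change t + τ ∈ Q (i (t + τ)) (i' t)
    rw [← c1]; exact (hag _ c3).1 hmem
  refine le_antisymm ?_ hle
  rw [hi' t]
  refine Nat.sInf_le ?_
  change t ∈ Q (i t) (i' (t + τ))
  rw [hag _ (hle.trans c3), c1]; exact hmem2

lemma TightIdx_step {β : Type*} (Δ : ℝ → ℝ → ℝ)
    (hTB : ∀ η > 0, ∀ σ > 0, ∃ (c : ℝ → β) (B : Set ℝ), KS B σ ∧ (c '' Bᶜ).Finite ∧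
      ∀ t s, t ∉ B → s ∉ B → c t = c s → Δ t s < η)
    (Q : ℕ → ℕ → Set ℝ) (i i' : ℝ → ℕ) (hi' : ∀ t, i' t = sInf {k | t ∈ Q (i t) k})
    (G : Set ℝ) (hG : volume Gᶜ = 0) (η : ℝ) (hη : 0 < η)
    (hm : ∀ t ∈ G, ∃ k, ∀ s ∈ G, Δ t s < η → i s = i t → s ∈ Q (i s) k)
    (ht : TightIdx i) : TightIdx i' := by
  intro σ hσ
  obtain ⟨N, hN⟩ := ht (σ / 2) (by positivity)
  obtain ⟨c, B, hB, hfin, hc⟩ := hTB η hη (σ / 2) (by positivity)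
  have k3 : KS Gᶜ 0 := KS.null hG
  have k := (hN.union hB (by positivity) (by positivity)).union k3 (by positivity) le_rfl
  set D := ({t | N < i t} ∪ B) ∪ Gᶜ with hD
  obtain ⟨S, hSD, hSf, hS⟩ := finite_reps (fun t => (c t, i t)) Dᶜ (by
    refine (hfin.prod (Set.finite_Iic N)).subset ?_
    rintro _ ⟨t, ht, rfl⟩
    simp only [hD, Set.mem_union, Set.mem_ofPred_eq, not_or, not_lt, Set.mem_compl_iff, not_not] at ht
    exact ⟨⟨t, ht.1.2, rfl⟩, ht.1.1⟩)
  have hmm : ∀ t ∈ S, ∃ k, ∀ s ∈ G, Δ t s < η → i s = i t → s ∈ Q (i s) k := by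
    intro t ht
    refine hm t ?_
    by_contra h
    exact hSD ht (Or.inr h)
  choose! K hK using hmm
  obtain ⟨N', hN'⟩ := (hSf.image K).bddAbove
  refine ⟨N', k.mono ?_ (by linarith)⟩
  intro t ht
  by_contra hcon
  obtain ⟨s, hs, hst⟩ := hS t hcon
  simp only [Prod.mk.injEq] at hst
  have hs2 := hSD hs
  simp only [hD, Set.mem_union, Set.mem_ofPred_eq, not_or, not_lt, Set.mem_compl_iff, not_not] at hcon hs2
  have h1 := hK s hs t hcon.2 (hc s t hs2.1.2 hcon.1.2 hst.1) hst.2.symm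
  have h2 : i' t ≤ K s := by rw [hi']; exact Nat.sInf_le h1
  have h3 : K s ≤ N' := hN' ⟨s, hs, rfl⟩
  simp only [Set.mem_ofPred_eq] at ht
  omega

/-- The index functions of the successive approximations. -/
noncomputable def idx (Q : ℕ → ℕ → ℕ → Set ℝ) : ℕ → ℝ → ℕ
  | 0, _ => 0
  | n + 1, t => sInf {k | t ∈ Q n (idx Q n t) k}

lemma idx_meas (Q : ℕ → ℕ → ℕ → Set ℝ) (hQ : ∀ n j k, NullMeasurableSet (Q n j k)) (n : ℕ) :
    AEMeasurable (idx Q n) := by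
  have h : ∀ n m, NullMeasurableSet {t | idx Q n t = m} := by
    intro n
    induction n with
    | zero => 
      intro m
      simp only [idx]
      exact (MeasurableSet.const _).nullMeasurableSet
    | succ n ih =>
      intro m
      have : {t | idx Q (n + 1) t = m} = ⋃ j, {t | idx Q n t = j} ∩
          ((Q n j m ∩ ⋂ k, ⋂ (_ : k < m), (Q n j k)ᶜ) ∪ ({t | m = 0} ∩ ⋂ k, (Q n j k)ᶜ)) := by
        ext t
        simp only [idx, Set.mem_ofPred_eq, Set.mem_iUnion, Set.mem_inter_iff, Set.mem_union,
          Set.mem_iInter, Set.mem_compl_iff, exists_eq_left']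
        constructor
        · rintro rfl
          by_cases hne : ∃ k, t ∈ Q n (idx Q n t) k
          · left
            exact ⟨Nat.sInf_mem (s := {k | t ∈ Q n (idx Q n t) k}) hne,
              fun k hk => Nat.notMem_of_lt_sInf (s := {k | t ∈ Q n (idx Q n t) k}) hk⟩
          · right
            push Not at hne
            refine ⟨?_, hne⟩
            rw [show {k | t ∈ Q n (idx Q n t) k} = ∅ from Set.eq_empty_of_forall_notMem hne]
            simp
        · rintro (⟨h1, h2⟩ | ⟨rfl, h2⟩)
          · refine le_antisymm (Nat.sInf_le h1) ?_
            by_contra hlt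
            exact h2 _ (not_le.1 hlt) (Nat.sInf_mem (s := {k | t ∈ Q n (idx Q n t) k}) ⟨m, h1⟩)
          · rw [show {k | t ∈ Q n (idx Q n t) k} = ∅ from Set.eq_empty_of_forall_notMem h2]
            simp
      rw [this]
      refine NullMeasurableSet.iUnion fun j => (ih j).inter (NullMeasurableSet.union ?_ ?_)
      · exact (hQ n j m).inter (NullMeasurableSet.iInter fun k => NullMeasurableSet.iInter
          fun _ => (hQ n j k).compl)
      · exact (MeasurableSet.const _).nullMeasurableSet.inter
          (NullMeasurableSet.iInter fun k => (hQ n j k).compl)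
  refine NullMeasurable.aemeasurable fun s _ => ?_
  have : idx Q n ⁻¹' s = ⋃ m ∈ s, {t | idx Q n t = m} := by ext t; simp
  rw [this]
  exact NullMeasurableSet.biUnion s.to_countable fun m _ => h n m

lemma idx_all {β : Type*} (Δ : ℝ → ℝ → ℝ) (hΔ0 : ∀ t, Δ t t = 0)
    (P : ℝ → Set ℝ) (hP : ∀ x y : ℝ, x ≤ y → P x ⊆ P y)
    (hTB : ∀ η > 0, ∀ σ > 0, ∃ (c : ℝ → β) (B : Set ℝ), KS B σ ∧ (c '' Bᶜ).Finite ∧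
      ∀ t s, t ∉ B → s ∉ B → c t = c s → Δ t s < η)
    (Q : ℕ → ℕ → ℕ → Set ℝ) (hQ : ∀ n j k, StabSet P (Q n j k))
    (G : Set ℝ) (hG : volume Gᶜ = 0) (Adm : ℕ → ℕ → Set ℝ) (hA0 : Adm 0 0 = Set.univ)
    (hAQ : ∀ n j k, Q n j k ⊆ Adm (n + 1) k)
    (hm : ∀ n, ∃ η > 0, ∀ t ∈ G, ∀ j, t ∈ Adm n j → ∃ k, ∀ s ∈ G, Δ t s < η → s ∈ Q n j k) (n : ℕ) :
    StabIdx P (idx Q n) ∧ TightIdx (idx Q n) ∧ (∀ t ∈ G, t ∈ Adm n (idx Q n t)) ∧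
      ∀ t ∈ G, t ∈ Q n (idx Q n t) (idx Q (n + 1) t) := by
  have hlast : ∀ n, (∀ t ∈ G, t ∈ Adm n (idx Q n t)) →
      ∀ t ∈ G, t ∈ Q n (idx Q n t) (idx Q (n + 1) t) := by
    intro n h t ht
    obtain ⟨η, hη, hmm⟩ := hm n
    obtain ⟨k, hk⟩ := hmm t ht _ (h t ht)
    exact Nat.sInf_mem (s := {k | t ∈ Q n (idx Q n t) k}) ⟨k, hk t ht (by rw [hΔ0]; exact hη)⟩
  have hmain : StabIdx P (idx Q n) ∧ TightIdx (idx Q n) ∧ (∀ t ∈ G, t ∈ Adm n (idx Q n t)) := by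
    induction n with
    | zero =>
      refine ⟨fun σ hσ => ⟨1, one_pos, fun τ _ => KS.null (by simp [idx])⟩,
        fun σ hσ => ⟨0, KS.null (by simp [idx])⟩, fun t _ => ?_⟩
      simp [idx, hA0]
    | succ n ih =>
      obtain ⟨h1, h2, h3⟩ := ih
      have h4 := hlast n h3
      have hT : TightIdx (idx Q (n + 1)) := by
        obtain ⟨η, hη, hmm⟩ := hm n
        refine TightIdx_step Δ hTB (Q n) (idx Q n) _ (fun t => rfl) G hG η hη ?_ h2
        intro t ht
        obtain ⟨k, hk⟩ := hmm t ht _ (h3 t ht)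
        exact ⟨k, fun s hs hts his => his ▸ hk s hs hts⟩
      refine ⟨StabIdx_step P hP (Q n) (hQ n) (idx Q n) _ (fun t => rfl) G hG
        (fun t ht => ⟨_, h4 t ht⟩) h1 h2 hT, hT, fun t ht => hAQ n _ _ (h4 t ht)⟩
  exact ⟨hmain.1, hmain.2.1, hmain.2.2, hlast n hmain.2.2⟩

section metric
variable {U : Type*} [MetricSpace U]

lemma bdist_nonneg (x y : U) : 0 ≤ bdist x y := le_min zero_le_one dist_nonneg
lemma bdist_self (x : U) : bdist x x = 0 := by simp [bdist]
lemma bdist_symm (x y : U) : bdist x y = bdist y x := by simp [bdist, dist_comm]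
lemma bdist_tri (x y z : U) : bdist x z ≤ bdist x y + bdist y z := by
  have h := dist_triangle x y z
  have h1 := @dist_nonneg _ _ x y
  have h2 := @dist_nonneg _ _ y z
  unfold bdist
  rcases min_cases 1 (dist x z) with a | a <;> rcases min_cases 1 (dist x y) with b | b <;>
  rcases min_cases 1 (dist y z) with c | c <;> linarith

lemma clDist_eq (A B : Closeds U) : clDist A B = (min 1 (edist A B)).toReal := rfl
lemma clDist_nonneg (x y : Closeds U) : 0 ≤ clDist x y := ENNReal.toReal_nonneg
lemma clDist_self (x : Closeds U) : clDist x x = 0 := by simp [clDist_eq]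
lemma clDist_symm (x y : Closeds U) : clDist x y = clDist y x := by simp [clDist_eq, edist_comm]
lemma min_one_ne_top (x : ℝ≥0∞) : min 1 x ≠ ⊤ := ((min_le_left _ _).trans_lt ENNReal.one_lt_top).ne
lemma clDist_tri (x y z : Closeds U) : clDist x z ≤ clDist x y + clDist y z := by
  simp only [clDist_eq]
  rw [← ENNReal.toReal_add (min_one_ne_top _) (min_one_ne_top _)]
  refine ENNReal.toReal_mono (ENNReal.add_ne_top.2 ⟨min_one_ne_top _, min_one_ne_top _⟩) ?_
  rcases le_total 1 (edist x y) with h | h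
  · rw [min_eq_left h]; exact (min_le_left _ _).trans le_self_add
  rcases le_total 1 (edist y z) with h' | h'
  · rw [min_eq_left h']; exact (min_le_left _ _).trans le_add_self
  rw [min_eq_right h, min_eq_right h']
  exact (min_le_right _ _).trans (edist_triangle _ _ _)

lemma clDist_lt {A B : Closeds U} {η : ℝ} (h0 : 0 < η) (h1 : η < 1) (h : clDist A B < η) :
    edist A B < ENNReal.ofReal η := by
  rw [clDist_eq] at h
  have h2 := (ENNReal.lt_ofReal_iff_toReal_lt (min_one_ne_top _)).2 h
  rcases min_lt_iff.1 h2 with h3 | h3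
  · exfalso
    have : ENNReal.ofReal η < 1 := by simpa using (ENNReal.ofReal_lt_one).2 h1
    exact lt_asymm h3 this
  · exact h3

lemma infDist_le_of_edist {A B : Closeds U} {η : ℝ} (h0 : 0 < η)
    (h : edist A B < ENNReal.ofReal η) (x : U) :
    Metric.infDist x (B : Set U) ≤ Metric.infDist x (A : Set U) + η := by
  have h1 : Metric.hausdorffEDist (A : Set U) (B : Set U) < ENNReal.ofReal η := h
  refine (Metric.infDist_le_infDist_add_hausdorffDist (h1.trans ENNReal.ofReal_lt_top).ne).trans ?_
  gcongr
  exact ENNReal.toReal_le_of_le_ofReal h0.le h1.le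

lemma infDist_abs {A B : Closeds U} {η : ℝ} (h0 : 0 < η) (h1 : η < 1) (h : clDist A B < η) (x : U) :
    |Metric.infDist x (A : Set U) - Metric.infDist x (B : Set U)| ≤ η := by
  have h2 := clDist_lt h0 h1 h
  have h3 := infDist_le_of_edist h0 h2 x
  rw [edist_comm] at h2
  have h4 := infDist_le_of_edist h0 h2 x
  rw [abs_le]; constructor <;> linarith

lemma bdist_lt {x y : U} {η : ℝ} (h1 : η < 1) (h : bdist x y < η) : dist x y < η := by
  rcases min_lt_iff.1 h with h | h
  · linarith
  · exact h

lemma bdist_le (x y : U) : bdist x y ≤ dist x y := min_le_right _ _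

/-- Joint distance of the data. -/
noncomputable def DD (g : ℝ → U) (F : ℝ → Closeds U) (t s : ℝ) : ℝ :=
  max (bdist (g t) (g s)) (clDist (F t) (F s))

lemma DD_self (g : ℝ → U) (F : ℝ → Closeds U) (t : ℝ) : DD g F t t = 0 := by
  simp [DD, bdist_self, clDist_self]

lemma DD_symm (g : ℝ → U) (F : ℝ → Closeds U) (t s : ℝ) : DD g F t s = DD g F s t := by
  unfold DD
  rw [bdist_symm (g t), clDist_symm (F t)]

lemma DD_tri (g : ℝ → U) (F : ℝ → Closeds U) (t s r : ℝ) :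
    DD g F t r ≤ DD g F t s + DD g F s r := by
  unfold DD
  exact max_le ((bdist_tri _ (g s) _).trans (add_le_add (le_max_left _ _) (le_max_left _ _)))
    ((clDist_tri _ (F s) _).trans (add_le_add (le_max_right _ _) (le_max_right _ _)))

lemma shift_meas {α : Type*} [TopologicalSpace α] {f : ℝ → α}
    (hf : AEStronglyMeasurable f volume) (τ : ℝ) :
    AEStronglyMeasurable (fun t => f (t + τ)) volume :=
  hf.comp_quasiMeasurePreserving (quasiMeasurePreserving_add_right volume τ)

lemma bdist_meas {f g : ℝ → U} (hf : AEStronglyMeasurable f volume)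
    (hg : AEStronglyMeasurable g volume) : AEMeasurable (fun t => bdist (f t) (g t)) :=
  aemeasurable_const.min (hf.dist hg).aemeasurable

lemma clDist_meas {f g : ℝ → Closeds U} (hf : AEStronglyMeasurable f volume)
    (hg : AEStronglyMeasurable g volume) : AEMeasurable (fun t => clDist (f t) (g t)) := by
  have h : AEMeasurable (fun t => edist (f t) (g t)) :=
    (continuous_edist.comp_aestronglyMeasurable (hf.prodMk hg)).aemeasurable
  exact (aemeasurable_const.min h).ennreal_toReal

lemma DD_meas {g : ℝ → U} {F : ℝ → Closeds U} (hg : AEStronglyMeasurable g volume)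
    (hF : AEStronglyMeasurable F volume) (ε τ : ℝ) :
    NullMeasurableSet {t | ε ≤ DD g F t (t + τ)} := by
  refine nullMeasurableSet_le aemeasurable_const ?_
  exact (bdist_meas hg (shift_meas hg τ)).max (clDist_meas hF (shift_meas hF τ))

lemma infDist_meas {F : ℝ → Closeds U} (hF : AEStronglyMeasurable F volume) {g : ℝ → U}
    (hg : AEStronglyMeasurable g volume) :
    AEMeasurable (fun t => Metric.infDist (g t) (F t : Set U)) := by
  have hc : Continuous (fun q : U × Closeds U => Metric.infEDist q.1 (q.2 : Set U)) :=
    TopologicalSpace.Closeds.continuous_infEDist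
  exact (hc.comp_aestronglyMeasurable (hg.prodMk hF)).aemeasurable.ennreal_toReal

end metric

lemma cheb {α : Type*} (d : α → α → ℝ) (f : ℝ → α) (τ ε1 ε σ : ℝ) (hε : 0 < ε) (h1 : ε1 ≤ ε * σ)
    (hm : AEMeasurable (fun t => d (f t) (f (t + τ)))) (hτ : τ ∈ APeriods d 1 ε1 f) :
    KS {t | ε ≤ d (f t) (f (t + τ))} σ := by
  have hK : KI (fun t => ENNReal.ofReal (d (f t) (f (t + τ)))) ε1 := by
    apply KI_of_limsup
    have h2 : weylDinf d 1 f (fun t => f (t + τ)) < ENNReal.ofReal ε1 := hτ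
    simpa [weylDinf, weylD] using h2
  filter_upwards [hK, eventually_gt_atTop 0] with l hl hl0 ξ
  have h3 := meas_ge_le_lintegral_div (μ := volume.restrict (Set.Icc ξ (ξ + l)))
    (hm.ennreal_ofReal.restrict) (ε := ENNReal.ofReal ε) (by simpa using hε) (by simp)
  calc volume (Set.Icc ξ (ξ + l) ∩ {t | ε ≤ d (f t) (f (t + τ))})
      ≤ (volume.restrict (Set.Icc ξ (ξ + l))) {t | ε ≤ d (f t) (f (t + τ))} := by
        rw [Set.inter_comm]; exact Measure.le_restrict_apply _ _
    _ ≤ (volume.restrict (Set.Icc ξ (ξ + l)))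
        {t | ENNReal.ofReal ε ≤ ENNReal.ofReal (d (f t) (f (t + τ)))} :=
        measure_mono fun t ht => ENNReal.ofReal_le_ofReal ht
    _ ≤ _ := h3
    _ ≤ ENNReal.ofReal (ε1 * l) / ENNReal.ofReal ε := by gcongr; exact hl ξ
    _ ≤ _ := by
        rw [← ENNReal.ofReal_div_of_pos hε]
        apply ENNReal.ofReal_le_ofReal
        rw [div_le_iff₀ hε]
        nlinarith

lemma tb_one {α : Type*} [TopologicalSpace α] (d : α → α → ℝ) (f : ℝ → α)
    (hsymm : ∀ x y, d x y = d y x) (htri : ∀ x y z, d x z ≤ d x y + d y z)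
    (hn : ∀ x : α, ∀ η > 0, {y | d y x < η} ∈ 𝓝 x)
    (h : ∀ ε > 0, ∀ δ > 0, ∃ K : Set α, IsCompact K ∧
      kappaW {t | ENNReal.ofReal ε ≤ dInfDist d (f t) K} < ENNReal.ofReal δ)
    (η : ℝ) (hη : 0 < η) (σ : ℝ) (hσ : 0 < σ) :
    ∃ (c : ℝ → α) (B : Set ℝ), KS B σ ∧ (c '' Bᶜ).Finite ∧
      ∀ t s, t ∉ B → s ∉ B → c t = c s → d (f t) (f s) < η := by
  obtain ⟨K, hK, hk⟩ := h (η / 4) (by positivity) σ hσ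
  obtain ⟨S, hSK, hS⟩ := hK.elim_nhds_subcover (fun x => {y | d y x < η / 4})
    (fun x _ => hn x _ (by positivity))
  set B := {t | ENNReal.ofReal (η / 4) ≤ dInfDist d (f t) K} with hB
  have hc : ∀ t, t ∉ B → ∃ z, z ∈ S ∧ d (f t) z < η / 2 := by
    intro t ht
    simp only [hB, Set.mem_ofPred_eq, not_le, dInfDist, iInf_lt_iff] at ht
    obtain ⟨y, hy, hty⟩ := ht
    have h1 := hS hy
    simp only [Set.mem_iUnion, Set.mem_ofPred_eq] at h1
    obtain ⟨z, hz, hyz⟩ := h1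
    rw [ENNReal.ofReal_lt_ofReal_iff (by positivity)] at hty
    exact ⟨z, hz, by linarith [htri (f t) y z]⟩
  have : Nonempty α := ⟨f 0⟩
  choose! c hcS hcd using hc
  refine ⟨c, B, KS_of_kappa hk, S.finite_toSet.subset ?_, ?_⟩
  · rintro _ ⟨t, ht, rfl⟩; exact hcS t ht
  · intro t s ht hs hts
    have h1 := hcd t ht
    have h2 := hcd s hs
    rw [← hts, hsymm] at h2
    linarith [htri (f t) (c t) (f s)]

section metric2
variable {U : Type*} [MetricSpace U]

lemma tb_DD (g : ℝ → U) (F : ℝ → Closeds U)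
    (hg : ∀ ε > 0, ∀ δ > 0, ∃ K : Set U, IsCompact K ∧
      kappaW {t | ENNReal.ofReal ε ≤ dInfDist bdist (g t) K} < ENNReal.ofReal δ)
    (hF : ∀ ε > 0, ∀ δ > 0, ∃ K : Set (Closeds U), IsCompact K ∧
      kappaW {t | ENNReal.ofReal ε ≤ dInfDist clDist (F t) K} < ENNReal.ofReal δ)
    (η : ℝ) (hη : 0 < η) (σ : ℝ) (hσ : 0 < σ) :
    ∃ (c : ℝ → U × Closeds U) (B : Set ℝ), KS B σ ∧ (c '' Bᶜ).Finite ∧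
      ∀ t s, t ∉ B → s ∉ B → c t = c s → DD g F t s < η := by
  obtain ⟨c1, B1, h1, h2, h3⟩ := tb_one bdist g bdist_symm bdist_tri (fun x η hη =>
    Filter.mem_of_superset (Metric.ball_mem_nhds x hη) fun y hy => (bdist_le _ _).trans_lt hy)
    hg η hη (σ / 2) (by positivity)
  obtain ⟨c2, B2, h1', h2', h3'⟩ := tb_one clDist F clDist_symm clDist_tri (fun x η hη => by
    have : Metric.eball x (ENNReal.ofReal η) ∈ 𝓝 x := Metric.eball_mem_nhds x (by simpa using hη)
    refine Filter.mem_of_superset this fun y hy => ?_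
    have hy' : edist y x < ENNReal.ofReal η := hy
    change clDist y x < η
    rw [clDist_eq, ← ENNReal.lt_ofReal_iff_toReal_lt (min_one_ne_top _)]
    exact (min_le_right _ _).trans_lt hy')
    hF η hη (σ / 2) (by positivity)
  refine ⟨fun t => (c1 t, c2 t), B1 ∪ B2,
    (h1.union h1' (by positivity) (by positivity)).mono subset_rfl (by linarith), ?_, ?_⟩
  · refine (h2.prod h2').subset ?_
    rintro _ ⟨t, ht, rfl⟩
    simp only [Set.mem_compl_iff, Set.mem_union, not_or] at ht
    exact ⟨⟨t, ht.1, rfl⟩, ⟨t, ht.2, rfl⟩⟩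
  · intro t s ht hs hts
    simp only [Set.mem_union, not_or] at ht hs
    simp only [Prod.mk.injEq] at hts
    exact max_lt (h3 t s ht.1 hs.1 hts.1) (h3' t s ht.2 hs.2 hts.2)

lemma T_sub_Tp {g : ℝ → U} {F : ℝ → Closeds U} (hg : AEStronglyMeasurable g volume)
    (hF : AEStronglyMeasurable F volume) (ε : ℝ) (hε : 0 < ε) (ε1 : ℝ) (h1 : ε1 ≤ ε * (ε / 2)) :
    APeriods bdist 1 ε1 g ∩ APeriods clDist 1 ε1 F ⊆ Tp (DD g F) ε := by
  rintro τ ⟨hτ1, hτ2⟩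
  have k1 := cheb bdist g τ ε1 ε (ε / 2) hε h1 (bdist_meas hg (shift_meas hg τ)) hτ1
  have k2 := cheb clDist F τ ε1 ε (ε / 2) hε h1 (clDist_meas hF (shift_meas hF τ)) hτ2
  refine (k1.union k2 (by positivity) (by positivity)).mono ?_ (by linarith)
  intro t ht
  have ht2 : ε ≤ DD g F t (t + τ) := ht
  exact le_max_iff.1 ht2

lemma h_per (h : ℝ → ℝ) (a : ℝ) (ha : 2 * Real.pi * a ∈ WMod bdist h) (e : ℝ) (he : 0 < e) :
    ∃ ε > 0, ∀ τ ∈ APeriods bdist 1 ε h, nn a τ < e := by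
  by_contra hcon
  push Not at hcon
  choose τ hτ hτe using fun n : ℕ => hcon (1 / ((n : ℝ) + 1)) (by positivity)
  have h1 : Tendsto (fun j => weylDinf bdist 1 h (fun t => h (t + τ j))) atTop (𝓝 0) := by
    refine tendsto_of_tendsto_of_tendsto_of_le_of_le (g := fun _ => 0)
      (h := fun j : ℕ => ENNReal.ofReal (1 / ((j : ℝ) + 1))) tendsto_const_nhds ?_
      (fun _ => zero_le) (fun j => (show weylDinf _ _ _ _ < _ from hτ j).le)
    have := ENNReal.tendsto_ofReal (tendsto_one_div_add_atTop_nhds_zero_nat (𝕜 := ℝ))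
    simpa using this
  have h2 := ha τ h1
  have h3 := (tendsto_iff_norm_sub_tendsto_zero.1 h2).eventually (gt_mem_nhds he)
  obtain ⟨j, hj⟩ := h3.exists
  have h4 := hτe j
  set x := a * τ j with hx
  have h5 : nn a (τ j) = |x - round x| := by unfold nn; rw [UnitAddCircle.norm_eq]
  set y := x - round x with hy
  have hyh : |y| ≤ 1 / 2 := abs_sub_round x
  have h6 : Complex.exp (Complex.I * ((2 * Real.pi * a * τ j : ℝ) : ℂ)) =
      Complex.exp (Complex.I * ((2 * Real.pi * y : ℝ) : ℂ)) := by
    rw [Complex.exp_eq_exp_iff_exists_int]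
    refine ⟨round x, ?_⟩
    rw [hy, hx]; push_cast; ring
  rw [h6, Complex.norm_exp_I_mul_ofReal_sub_one] at hj
  have h7 : 4 * |y| ≤ ‖2 * Real.sin (2 * Real.pi * y / 2)‖ := by
    have e1 : 2 * Real.pi * y / 2 = Real.pi * y := by ring
    rw [e1, Real.norm_eq_abs, abs_mul, abs_of_pos (two_pos : (0:ℝ) < 2)]
    have e2 : |Real.sin (Real.pi * y)| = |Real.sin (Real.pi * |y|)| := by
      rcases abs_cases y with ⟨h, _⟩ | ⟨h, _⟩ <;> rw [h]
      rw [mul_neg, Real.sin_neg, abs_neg]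
    rw [e2]
    have e3 := Real.mul_le_sin (x := Real.pi * |y|) (by positivity)
      (by nlinarith [Real.pi_pos])
    have e4 : 2 / Real.pi * (Real.pi * |y|) = 2 * |y| := by
      have := Real.pi_ne_zero
      field_simp
    have := le_abs_self (Real.sin (Real.pi * |y|))
    linarith
  rw [h5] at h4
  linarith [abs_nonneg y]

end metric2

lemma exists_enum {α : Type*} [PseudoEMetricSpace α] (x0 : α) (f : ℝ → α)
    (hf : AEStronglyMeasurable f volume) :
    ∃ s : ℕ → α, ∀ᵐ t, ∀ ε > 0, ∃ i, edist (f t) (s i) < ε := by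
  obtain ⟨S, ⟨c, hc, hSc⟩, hS⟩ := hf.isSeparable_ae_range
  obtain ⟨s, hs⟩ := (hc.insert x0).exists_eq_range ⟨x0, by simp⟩
  refine ⟨s, ?_⟩
  filter_upwards [hS] with t ht ε hε
  obtain ⟨y, hy, hd⟩ := EMetric.mem_closure_iff.1 (hSc ht) ε hε
  have : y ∈ Set.range s := hs ▸ Set.mem_insert_of_mem _ hy
  obtain ⟨i, rfl⟩ := this
  exact ⟨i, hd⟩

lemma exists_y {U : Type*} [MetricSpace U] (x₀ : U) (g : ℝ → U) (F : ℝ → Closeds U)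
    (hg : AEStronglyMeasurable g volume) (hF : AEStronglyMeasurable F volume)
    (hFne : ∀ t : ℝ, (F t : Set U).Nonempty) :
    ∃ (y : ℕ → U) (G : Set ℝ), volume Gᶜ = 0 ∧
      (∀ t ∈ G, ∀ j, ∀ s > 0, ∃ k, dist (y j) (y k) < Metric.infDist (y j) (F t : Set U) + s ∧
        Metric.infDist (y k) (F t : Set U) < s) ∧
      (∀ t ∈ G, ∀ s > 0, ∃ j, dist (y j) (g t) < s) := by
  classical
  obtain ⟨gs, hgs⟩ := exists_enum x₀ g hg
  obtain ⟨Fs, hFs⟩ := exists_enum (⊥ : Closeds U) F hF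
  have hpr : ∀ (q : ℕ × ℕ) (x : U), ∃ z, (Fs q.1 : Set U).Nonempty →
      z ∈ Fs q.1 ∧ dist x z < Metric.infDist x (Fs q.1 : Set U) + 1 / ((q.2 : ℝ) + 1) := by
    intro q x
    by_cases hne : (Fs q.1 : Set U).Nonempty
    · obtain ⟨z, hz, hd⟩ := (Metric.infDist_lt_iff (x := x) (r := Metric.infDist x (Fs q.1 : Set U) +
        1 / ((q.2 : ℝ) + 1)) hne).1 (by
          have : (0:ℝ) < 1 / ((q.2 : ℝ) + 1) := by positivity
          linarith)
      exact ⟨z, fun _ => ⟨hz, hd⟩⟩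
    · exact ⟨x, fun h => absurd h hne⟩
  choose pr hpr using hpr
  obtain ⟨e, he⟩ := exists_surjective_nat (ℕ × List (ℕ × ℕ))
  set yw : ℕ × List (ℕ × ℕ) → U := fun q => q.2.foldr pr (gs q.1) with hyw
  refine ⟨fun n => yw (e n), {t | (∀ ε > 0, ∃ i, edist (g t) (gs i) < ε) ∧
    (∀ ε > 0, ∃ i, edist (F t) (Fs i) < ε)}, hgs.and hFs, ?_, ?_⟩
  · rintro t ⟨-, ht⟩ j s hs
    obtain ⟨i, hi⟩ := ht (ENNReal.ofReal (s / 4)) (by simpa using hs)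
    obtain ⟨m, hm⟩ := exists_nat_one_div_lt (show (0:ℝ) < s / 4 by positivity)
    have hne : (Fs i : Set U).Nonempty :=
      Metric.nonempty_of_hausdorffEDist_ne_top (hFne t) (hi.trans ENNReal.ofReal_lt_top).ne
    obtain ⟨hz1, hz2⟩ := hpr (i, m) (yw (e j)) hne
    obtain ⟨k, hk⟩ := he ((e j).1, (i, m) :: (e j).2)
    have hyk : yw (e k) = pr (i, m) (yw (e j)) := by rw [hk]; rfl
    refine ⟨k, ?_, ?_⟩
    · have := infDist_le_of_edist (by positivity) hi (yw (e j))
      simp only at hz2 ⊢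
      rw [hyk]; linarith
    · rw [edist_comm] at hi
      have := infDist_le_of_edist (by positivity) hi (pr (i, m) (yw (e j)))
      rw [Metric.infDist_zero_of_mem hz1] at this
      simp only [hyk]; linarith
  · rintro t ⟨ht, -⟩ s hs
    obtain ⟨i, hi⟩ := ht (ENNReal.ofReal s) (by simpa using hs)
    obtain ⟨k, hk⟩ := he (i, [])
    refine ⟨k, ?_⟩
    have hyk : yw (e k) = gs i := by rw [hk]; rfl
    simp only [hyk]
    rw [edist_comm, edist_dist] at hi
    exact (ENNReal.ofReal_lt_ofReal_iff hs).1 hi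

section core
variable {U : Type*} [MetricSpace U]

/-- Decision functions. -/
noncomputable def psi (y : ℕ → U) (g : ℝ → U) (F : ℝ → Closeds U) (r : ℕ → ℝ) :
    ℕ → ℕ → ℕ → ℝ → ℝ
  | 0, _, k, t => max (Metric.infDist (y k) (F t : Set U))
      (dist (y k) (g t) - Metric.infDist (g t) (F t : Set U))
  | n + 1, j, k, t => open Classical in
      if dist (y j) (y k) < 2 * r n then Metric.infDist (y k) (F t : Set U) else r (n + 1)

/-- Admissible indices. -/
def Adm (y : ℕ → U) (F : ℝ → Closeds U) (r : ℕ → ℝ) : ℕ → ℕ → Set ℝ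
  | 0, _ => Set.univ
  | n + 1, k => {t | Metric.infDist (y k) (F t : Set U) < r n}

lemma psi_lip (y : ℕ → U) (g : ℝ → U) (F : ℝ → Closeds U) (r : ℕ → ℝ) (n j k : ℕ) (η : ℝ)
    (h0 : 0 < η) (h1 : η < 1) (t s : ℝ) (h : DD g F t s < η) :
    |psi y g F r n j k t - psi y g F r n j k s| ≤ 3 * η := by
  have hb : dist (g t) (g s) < η := bdist_lt h1 ((le_max_left _ _).trans_lt h)
  have hc : clDist (F t) (F s) < η := (le_max_right _ _).trans_lt h
  have hk := infDist_abs h0 h1 hc (y k)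
  cases n with
  | zero =>
    refine (abs_max_sub_max_le_max _ _ _ _).trans (max_le (hk.trans (by linarith)) ?_)
    have e1 := abs_le.1 (infDist_abs h0 h1 hc (g t))
    have e2 := Metric.infDist_le_infDist_add_dist (x := g t) (y := g s) (s := (F s : Set U))
    have e3 := Metric.infDist_le_infDist_add_dist (x := g s) (y := g t) (s := (F s : Set U))
    have e4 := dist_triangle (y k) (g s) (g t)
    have e5 := dist_triangle (y k) (g t) (g s)
    rw [dist_comm (g s) (g t)] at e3 e4
    rw [abs_le]
    constructor <;> linarith [e1.1, e1.2]
  | succ n =>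
    simp only [psi]
    split_ifs
    · linarith
    · simp; linarith

lemma psi_meas (y : ℕ → U) (g : ℝ → U) (F : ℝ → Closeds U) (r : ℕ → ℝ)
    (hg : AEStronglyMeasurable g volume) (hF : AEStronglyMeasurable F volume) (n j k : ℕ) :
    AEMeasurable (psi y g F r n j k) := by
  have hk : AEMeasurable (fun t => Metric.infDist (y k) (F t : Set U)) :=
    infDist_meas hF (g := fun _ => y k) aestronglyMeasurable_const
  cases n with
  | zero =>
    exact hk.max (((aestronglyMeasurable_const (b := y k)).dist hg).aemeasurable.sub
      (infDist_meas hF hg))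
  | succ n =>
    by_cases h : dist (y j) (y k) < 2 * r n
    · refine hk.congr (ae_of_all _ fun t => ?_)
      simp [psi, h]
    · refine (aemeasurable_const (b := r (n + 1))).congr (ae_of_all _ fun t => ?_)
      simp only [psi, h, if_false]

lemma psi_margin (y : ℕ → U) (g : ℝ → U) (F : ℝ → Closeds U) (r : ℕ → ℝ) (hr : ∀ n, 0 < r n)
    (hr2 : ∀ n, r (n + 1) ≤ r n) (G : Set ℝ)
    (Y1 : ∀ t ∈ G, ∀ j, ∀ s > 0, ∃ k, dist (y j) (y k) < Metric.infDist (y j) (F t : Set U) + s ∧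
        Metric.infDist (y k) (F t : Set U) < s)
    (Y2 : ∀ t ∈ G, ∀ s > 0, ∃ j, dist (y j) (g t) < s) (n : ℕ) (t : ℝ) (ht : t ∈ G) (j : ℕ)
    (hA : t ∈ Adm y F r n j) : ∃ k, psi y g F r n j k t ≤ r n / 8 := by
  have hrn := hr n
  cases n with
  | zero =>
    obtain ⟨i, hi⟩ := Y2 t ht (r 0 / 24) (by positivity)
    obtain ⟨k, h1, h2⟩ := Y1 t ht i (r 0 / 24) (by positivity)
    refine ⟨k, max_le (by linarith) ?_⟩
    have e2 := Metric.infDist_le_infDist_add_dist (x := y i) (y := g t) (s := (F t : Set U))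
    have e4 := dist_triangle (y k) (y i) (g t)
    rw [dist_comm (y k) (y i)] at e4
    linarith
  | succ n =>
    obtain ⟨k, h1, h2⟩ := Y1 t ht j (r (n + 1) / 8) (by positivity)
    have h3 : Metric.infDist (y j) (F t : Set U) < r n := hA
    refine ⟨k, ?_⟩
    have h4 := hr2 n
    have h5 : dist (y j) (y k) < 2 * r n := by linarith
    simp only [psi, h5, if_true]
    exact h2.le

lemma core (x₀ : U) [CompleteSpace U] (g : ℝ → U) (F : ℝ → Closeds U)
    (hg : MemWpTilde bdist 1 x₀ g) (hFne : ∀ t : ℝ, (F t : Set U).Nonempty)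
    (hF : MemWpTilde clDist 1 (⟨{x₀}, isClosed_singleton⟩ : Closeds U) F)
    (hT : ∀ ε > (0 : ℝ), RelDense (APeriods bdist 1 ε g ∩ APeriods clDist 1 ε F))
    (δ : ℝ) (hδ : 0 < δ) (M : Set ℝ) (hM : ∀ η > 0, ∃ x ∈ M, 0 < x ∧ x < η) :
    ∃ (f : ℝ → U) (a : ℕ → ℝ), (∀ k, a k ∈ M) ∧ RDFam (Tp (DD g F)) ∧
      AEStronglyMeasurable f volume ∧
      (∀ᵐ t, f t ∈ (F t : Set U)) ∧
      (∀ᵐ t, dist (f t) (g t) < Metric.infDist (g t) (F t : Set U) + δ) ∧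
      (∀ η > 0, ∀ σ > 0, ∃ ε > 0, ∀ τ ∈ PP (DD g F) a ε,
        KS {t | η ≤ dist (f t) (f (t + τ))} σ) ∧
      (∀ η > 0, ∀ σ > 0, ∃ S : Set U, S.Finite ∧ KS {t | ∀ z ∈ S, η ≤ dist (f t) z} σ) := by
  have hgm := hg.1.1
  have hFm := hF.1.1
  obtain ⟨y, G, hG, Y1, Y2⟩ := exists_y x₀ g F hgm hFm hFne
  have hrd : RDFam (Tp (DD g F)) := by
    refine Tp_fam _ (DD_symm g F) (DD_tri g F) fun ε hε => ?_
    exact (hT (ε * (ε / 2)) (by positivity)).mono (T_sub_Tp hgm hFm ε hε _ le_rfl)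
  obtain ⟨a, ha⟩ := exists_freq (DD g F) hrd M hM
  set r : ℕ → ℝ := fun n => δ / 8 / 2 ^ n with hrdef
  have hr : ∀ n, 0 < r n := fun n => by positivity
  have hr2 : ∀ n, r (n + 1) ≤ r n := fun n => by
    simp only [hrdef, pow_succ]
    gcongr
    have : (0:ℝ) < 2 ^ n := by positivity
    linarith
  set Q : ℕ → ℕ → ℕ → Set ℝ := fun n j k => {t | psi y g F r n j k t < r n * piF a t} with hQ
  have hQs : ∀ n j k, StabSet (PP (DD g F) a) (Q n j k) := fun n j k =>
    stab_lt (DD g F) (DD_meas hgm hFm) M a ha (psi y g F r n j k)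
      (psi_meas y g F r hgm hFm n j k) 3 (psi_lip y g F r n j k) (r n) (hr n)
  have hQm : ∀ n j k, NullMeasurableSet (Q n j k) := fun n j k =>
    nullMeasurableSet_lt (psi_meas y g F r hgm hFm n j k)
      ((piF_cont a).measurable.aemeasurable.const_mul _)
  have hAQ : ∀ n j k, Q n j k ⊆ Adm y F r (n + 1) k := by
    intro n j k t ht
    have h1 : psi y g F r n j k t < r n * piF a t := ht
    have h2 : r n * piF a t ≤ r n := mul_le_of_le_one_right (hr n).le (piF_upper a t)
    show Metric.infDist (y k) (F t : Set U) < r n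
    cases n with
    | zero => exact ((le_max_left _ _).trans_lt h1).trans_le h2
    | succ n =>
      simp only [psi] at h1
      split_ifs at h1
      · linarith
      · linarith
  have hstep : ∀ n j k t, t ∈ Q (n + 1) j k → dist (y j) (y k) < 2 * r n := by
    intro n j k t ht
    have h1 : psi y g F r (n + 1) j k t < r (n + 1) * piF a t := ht
    have h2 : r (n + 1) * piF a t ≤ r (n + 1) :=
      mul_le_of_le_one_right (hr _).le (piF_upper a t)
    simp only [psi] at h1
    split_ifs at h1 with h
    · exact h
    · linarith
  have hall := idx_all (DD g F) (DD_self g F) (PP (DD g F) a) (fun _ _ h => PP_mono _ a h)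
    (tb_DD g F hg.2.2 hF.2.2) Q hQs G hG (Adm y F r) rfl hAQ (by
      intro n
      have hrn := hr n
      refine ⟨min (r n / 24) (1 / 2), by positivity, fun t ht j hA => ?_⟩
      obtain ⟨k, hk⟩ := psi_margin y g F r hr hr2 G Y1 Y2 n t ht j hA
      refine ⟨k, fun s hs hts => ?_⟩
      have h1 := abs_le.1 (psi_lip y g F r n j k _ (by positivity)
        ((min_le_right _ _).trans_lt (by norm_num)) t s hts)
      have h2 := min_le_left (r n / 24) (1 / 2)
      have h3 := piF_lower a s
      show psi y g F r n j k s < r n * piF a s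
      nlinarith [h1.1])
  have hidx : ∀ n, ∀ t ∈ G, t ∈ Q n (idx Q n t) (idx Q (n + 1) t) := fun n => (hall n).2.2.2
  set u : ℕ → ℝ → U := fun n t => y (idx Q (n + 1) t) with hu
  have hud : ∀ t ∈ G, ∀ n, dist (u n t) (u (n + 1) t) ≤ (δ / 2) / 2 / 2 ^ n := by
    intro t ht n
    refine (hstep n _ _ t (hidx (n + 1) t ht)).le.trans (le_of_eq ?_)
    simp only [hrdef]; ring
  have hlim : ∀ t, ∃ z, t ∈ G → Tendsto (fun n => u n t) atTop (𝓝 z) := by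
    intro t
    by_cases ht : t ∈ G
    · obtain ⟨z, hz⟩ := cauchySeq_tendsto_of_complete (cauchySeq_of_le_geometric_two (hud t ht))
      exact ⟨z, fun _ => hz⟩
    · exact ⟨x₀, fun h => absurd h ht⟩
  choose f hf using hlim
  have hGae : ∀ᵐ t, t ∈ G := hG
  have hfd : ∀ t ∈ G, ∀ n, dist (u n t) (f t) ≤ (δ / 2) / 2 ^ n := fun t ht n =>
    dist_le_of_le_geometric_two_of_tendsto (hud t ht) (hf t ht) n
  have hinf : ∀ t ∈ G, ∀ n, Metric.infDist (u n t) (F t : Set U) < r n := fun t ht n =>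
    hAQ n _ _ (hidx n t ht)
  have hr0 : Tendsto r atTop (𝓝 0) := by
    have := (tendsto_pow_atTop_nhds_zero_of_lt_one (r := (1/2 : ℝ)) (by norm_num)
      (by norm_num)).const_mul (δ / 8)
    simpa [hrdef, div_eq_mul_inv] using this
  refine ⟨f, a, fun k => (ha k).1, hrd, ?_, ?_, ?_, ?_, ?_⟩
  · refine aestronglyMeasurable_of_tendsto_ae atTop (f := u) (fun n => ?_) ?_
    · have hs : StronglyMeasurable y := StronglyMeasurable.of_discrete
      exact hs.aestronglyMeasurable.comp_aemeasurable (idx_meas Q hQm (n + 1))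
    · filter_upwards [hGae] with t ht using hf t ht
  · filter_upwards [hGae] with t ht
    refine ((F t).isClosed.mem_iff_infDist_zero (hFne t)).2 ?_
    have h1 : Tendsto (fun n => Metric.infDist (u n t) (F t : Set U)) atTop
        (𝓝 (Metric.infDist (f t) (F t : Set U))) :=
      ((Metric.continuous_infDist_pt _).tendsto _).comp (hf t ht)
    have h2 := le_of_tendsto_of_tendsto' h1 hr0 fun n => (hinf t ht n).le
    exact le_antisymm h2 Metric.infDist_nonneg
  · filter_upwards [hGae] with t ht
    have h1 : psi y g F r 0 (idx Q 0 t) (idx Q 1 t) t < r 0 * piF a t := hidx 0 t ht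
    have h2 : r 0 * piF a t ≤ r 0 := mul_le_of_le_one_right (hr 0).le (piF_upper a t)
    have h3 : dist (u 0 t) (g t) - Metric.infDist (g t) (F t : Set U) < r 0 :=
      ((le_max_right _ _).trans_lt h1).trans_le h2
    have h4 := hfd t ht 0
    have h5 := dist_triangle_left (f t) (g t) (u 0 t)
    have h6 : r 0 = δ / 8 := by simp [hrdef]
    rw [pow_zero, div_one] at h4
    linarith
  · intro η hη σ hσ
    obtain ⟨n, hn⟩ := exists_pow_lt_of_lt_one (show 0 < η / (2 * δ) by positivity)
      (show (1 / 2 : ℝ) < 1 by norm_num)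
    have hn' : (δ / 2) / 2 ^ n < η / 2 := by
      rw [one_div, inv_pow, lt_div_iff₀ (by positivity)] at hn
      rw [div_eq_mul_inv]
      nlinarith
    obtain ⟨ε, hε, h⟩ := (hall (n + 1)).1 (σ / 2) (by positivity)
    refine ⟨ε, hε, fun τ hτ => ?_⟩
    have hnull : KS (Gᶜ ∪ {t | t + τ ∈ Gᶜ}) (σ / 2) :=
      ((KS.null hG (a := σ / 4)).union ((KS.null hG (a := σ / 4)).shift τ) (by positivity)
        (by positivity)).mono subset_rfl (by linarith)
    refine ((h τ hτ).union hnull (by positivity) (by positivity)).mono ?_ (by linarith)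
    intro t (ht : η ≤ dist (f t) (f (t + τ)))
    by_contra hcon
    simp only [Set.mem_union, not_or, Set.mem_ofPred_eq, Set.mem_compl_iff, not_not, ne_eq] at hcon
    obtain ⟨h1, h2, h3⟩ := hcon
    have e1 := hfd t h2 n
    have e2 := hfd _ h3 n
    have e3 : u n t = u n (t + τ) := congrArg y h1
    rw [← e3] at e2
    have := dist_triangle_left (f t) (f (t + τ)) (u n t)
    linarith
  · intro η hη σ hσ
    obtain ⟨n, hn⟩ := exists_pow_lt_of_lt_one (show 0 < η / (2 * δ) by positivity)
      (show (1 / 2 : ℝ) < 1 by norm_num)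
    have hn' : (δ / 2) / 2 ^ n < η / 2 := by
      rw [one_div, inv_pow, lt_div_iff₀ (by positivity)] at hn
      rw [div_eq_mul_inv]
      nlinarith
    obtain ⟨N, hN⟩ := (hall (n + 1)).2.1 (σ / 2) (by positivity)
    refine ⟨y '' Set.Iic N, (Set.finite_Iic N).image y, ?_⟩
    refine (hN.union (KS.null hG (a := σ / 2)) (by positivity) (by positivity)).mono ?_
      (by linarith)
    intro t (ht : ∀ z ∈ _, η ≤ dist (f t) z)
    by_contra hcon
    simp only [Set.mem_union, not_or, Set.mem_ofPred_eq, Set.mem_compl_iff, not_not, not_lt] at hcon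
    have e1 := hfd t hcon.2 n
    have e2 := ht (u n t) ⟨_, hcon.1, rfl⟩
    rw [dist_comm] at e2
    linarith

end core

lemma KI.mono {φ ψ : ℝ → ℝ≥0∞} {a b : ℝ} (h : KI ψ a) (hφ : ∀ t, φ t ≤ ψ t) (hab : a ≤ b) :
    KI φ b := by
  filter_upwards [h, eventually_gt_atTop 0] with l hl hl0 ξ
  exact (lintegral_mono hφ).trans ((hl ξ).trans (ENNReal.ofReal_le_ofReal (by gcongr)))

lemma KI.add {φ ψ : ℝ → ℝ≥0∞} {a b : ℝ} (h : KI φ a) (h2 : KI ψ b) (hφ : AEMeasurable φ)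
    (ha : 0 ≤ a) (hb : 0 ≤ b) : KI (fun t => φ t + ψ t) (a + b) := by
  filter_upwards [h, h2, eventually_gt_atTop 0] with l h1 h2 hl0 ξ
  rw [lintegral_add_left' hφ.restrict, add_mul, ENNReal.ofReal_add (by positivity) (by positivity)]
  exact add_le_add (h1 ξ) (h2 ξ)

lemma KI.const_mul {φ : ℝ → ℝ≥0∞} {a : ℝ} (h : KI φ a) (c : ℝ) (hc : 0 ≤ c) :
    KI (fun t => ENNReal.ofReal c * φ t) (c * a) := by
  filter_upwards [h] with l h1 ξ
  rw [lintegral_const_mul' _ _ ENNReal.ofReal_ne_top, mul_assoc, ENNReal.ofReal_mul hc]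
  gcongr
  exact h1 ξ

lemma KI.shift {φ : ℝ → ℝ≥0∞} {a : ℝ} (h : KI φ a) (τ : ℝ) : KI (fun t => φ (t + τ)) a := by
  filter_upwards [h] with l h1 ξ
  have e := (measurePreserving_add_right volume τ).setLIntegral_comp_preimage_emb
    (MeasurableEquiv.addRight τ).measurableEmbedding φ (Set.Icc (ξ + τ) (ξ + τ + l))
  have e2 : (fun x => x + τ) ⁻¹' Set.Icc (ξ + τ) (ξ + τ + l) = Set.Icc ξ (ξ + l) := by
    ext t
    simp only [Set.mem_preimage, Set.mem_Icc]
    constructor <;> rintro ⟨h1, h2⟩ <;> constructor <;> linarith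
  rw [e2] at e
  rw [e]
  exact h1 _

lemma KI_const (c : ℝ) (hc : 0 ≤ c) : KI (fun _ => ENNReal.ofReal c) c := by
  filter_upwards with l ξ
  rw [setLIntegral_const, Real.volume_Icc, ENNReal.ofReal_mul hc]
  simp

lemma KI_ind {T : Set ℝ} {σ : ℝ} (h : KS T σ) : KI (T.indicator 1) σ := by
  filter_upwards [h] with l hl ξ
  refine (lintegral_indicator_one_le T).trans ?_
  rw [Measure.restrict_apply' measurableSet_Icc, Set.inter_comm]
  exact hl ξ

lemma weyl_of_KI {α : Type*} (d : α → α → ℝ) (p : ℝ) (hp : 1 ≤ p) (f g : ℝ → α) (a : ℝ)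
    (h : KI (fun t => ENNReal.ofReal (d (f t) (g t) ^ p)) a) :
    weylDinf d p f g ≤ (ENNReal.ofReal a) ^ (1 / p) := by
  refine limsup_le_of_le (by isBoundedDefault) ?_
  filter_upwards [h.eventually] with l hl
  exact ENNReal.rpow_le_rpow hl (by positivity)

lemma APeriods_mono {α : Type*} (d : α → α → ℝ) (p : ℝ) (f : ℝ → α) {x y : ℝ} (h : x ≤ y) :
    APeriods d p x f ⊆ APeriods d p y f :=
  fun _ hτ => lt_of_lt_of_le hτ (ENNReal.ofReal_le_ofReal h)

section fin
variable {U : Type*} [MetricSpace U]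

lemma per_of_KS (f : ℝ → U) (τ η σ ε : ℝ) (hη : 0 < η) (hσ : 0 < σ) (hε : η + σ < ε)
    (h : KS {t | η ≤ dist (f t) (f (t + τ))} σ) : τ ∈ APeriods bdist 1 ε f := by
  have h1 : KI (fun t => ENNReal.ofReal (bdist (f t) (f (t + τ)) ^ (1:ℝ))) (η + σ) := by
    refine ((KI_const η hη.le).add (KI_ind h) aemeasurable_const hη.le hσ.le).mono ?_ le_rfl
    intro t
    rw [Real.rpow_one]
    by_cases ht : η ≤ dist (f t) (f (t + τ))
    · rw [Set.indicator_of_mem (show t ∈ {t | η ≤ dist (f t) (f (t + τ))} from ht)]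
      refine le_trans ?_ le_add_self
      exact ENNReal.ofReal_le_one.2 (min_le_left _ _)
    · refine le_trans ?_ le_self_add
      exact ENNReal.ofReal_le_ofReal ((bdist_le _ _).trans (not_le.1 ht).le)
  have h2 := weyl_of_KI bdist 1 le_rfl f (fun t => f (t + τ)) _ h1
  rw [one_div, inv_one, ENNReal.rpow_one] at h2
  exact h2.trans_lt ((ENNReal.ofReal_lt_ofReal_iff (by linarith)).2 hε)

lemma compact_cond (d : U → U → ℝ) (hd : ∀ x y, d x y ≤ dist x y) (f : ℝ → U)
    (hS : ∀ η > 0, ∀ σ > 0, ∃ S : Set U, S.Finite ∧ KS {t | ∀ z ∈ S, η ≤ dist (f t) z} σ) :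
    ∀ ε > 0, ∀ δ > 0, ∃ K : Set U, IsCompact K ∧
      kappaW {t | ENNReal.ofReal ε ≤ dInfDist d (f t) K} < ENNReal.ofReal δ := by
  intro ε hε δ hδ
  obtain ⟨S, hS1, hS2⟩ := hS ε hε (δ / 2) (by positivity)
  refine ⟨S, hS1.isCompact, (hS2.mono ?_ le_rfl).kappa_lt (by linarith) hδ⟩
  intro t (ht : ENNReal.ofReal ε ≤ dInfDist d (f t) S) z hz
  have h1 : ENNReal.ofReal ε ≤ ENNReal.ofReal (d (f t) z) := ht.trans (iInf₂_le z hz)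
  have h2 := h1.trans (ENNReal.ofReal_le_ofReal (hd (f t) z))
  exact (ENNReal.ofReal_le_ofReal_iff dist_nonneg).1 h2

lemma dist_le_haus (x₀ x : U) (A : Closeds U) (hA : (A : Set U).Nonempty)
    (hb : Bornology.IsBounded (A : Set U)) (hx : x ∈ A) :
    dist x x₀ ≤ clbDist A (⟨{x₀}, isClosed_singleton⟩ : Closeds U) := by
  have h := Metric.infDist_le_hausdorffDist_of_mem (s := (A : Set U)) (t := {x₀}) hx
    (Metric.hausdorffEDist_ne_top_of_nonempty_of_bounded hA (Set.singleton_nonempty _) hb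
      Bornology.isBounded_singleton)
  rw [Metric.infDist_singleton] at h
  exact h

lemma star_of (x₀ : U) (F : ℝ → Closeds U) (hFne : ∀ t : ℝ, (F t : Set U).Nonempty) (p : ℝ)
    (hp : 1 ≤ p) (hFbdd : ∀ t : ℝ, Bornology.IsBounded (F t : Set U))
    (hFstar : MemMpStar clbDist p (⟨{x₀}, isClosed_singleton⟩ : Closeds U) F)
    (f : ℝ → U) (hfm : AEStronglyMeasurable f volume) (hfF : ∀ᵐ t, f t ∈ (F t : Set U)) :
    MemMpStar dist p x₀ f := by
  have hle : ∀ᵐ t, ENNReal.ofReal (dist (f t) x₀ ^ p) ≤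
      ENNReal.ofReal (clbDist (F t) (⟨{x₀}, isClosed_singleton⟩ : Closeds U) ^ p) := by
    filter_upwards [hfF] with t ht
    exact ENNReal.ofReal_le_ofReal (Real.rpow_le_rpow dist_nonneg
      (dist_le_haus x₀ _ _ (hFne t) (hFbdd t) ht) (by linarith))
  obtain ⟨⟨_, C, hC⟩, hs⟩ := hFstar
  refine ⟨⟨hfm, C, fun ξ => (lintegral_mono_ae (ae_restrict_of_ae hle)).trans (hC ξ)⟩, ?_⟩
  intro ε hε
  obtain ⟨δ, hδ, h⟩ := hs ε hε
  refine ⟨δ, hδ, fun T hT hk => lt_of_le_of_lt ?_ (h T hT hk)⟩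
  refine limsup_le_limsup (Eventually.of_forall fun l => iSup_mono fun ξ => ?_)
  exact mul_le_mul_right (lintegral_mono_ae (ae_restrict_of_ae hle)) _

lemma dist_pow_le (x₀ x y : U) (p : ℝ) (hp : 1 ≤ p) :
    dist x y ^ p ≤ 2 ^ p * (dist x x₀ ^ p + dist y x₀ ^ p) := by
  have hp0 : 0 ≤ p := by linarith
  have key : ∀ u v : ℝ, 0 ≤ u → u ≤ v → ∀ d, 0 ≤ d → d ≤ u + v → d ^ p ≤ 2 ^ p * (u ^ p + v ^ p) := by
    intro u v hu huv d hd hduv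
    calc d ^ p ≤ (2 * v) ^ p := Real.rpow_le_rpow hd (by linarith) hp0
      _ = 2 ^ p * v ^ p := Real.mul_rpow (by norm_num) (by linarith)
      _ ≤ _ := by
        have := Real.rpow_nonneg hu p
        gcongr; linarith
  have htri := dist_triangle_right x y x₀
  rcases le_total (dist x x₀) (dist y x₀) with h | h
  · exact key _ _ dist_nonneg h _ dist_nonneg htri
  · rw [add_comm (dist x x₀ ^ p)]
    exact key _ _ dist_nonneg h _ dist_nonneg (by linarith)

lemma KS_toMeas {T : Set ℝ} {σ : ℝ} (h : KS T σ) : KS (toMeasurable volume T) σ := by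
  filter_upwards [h] with l hl ξ
  rw [Set.inter_comm, Measure.measure_toMeasurable_inter_of_sFinite measurableSet_Icc,
    Set.inter_comm]
  exact hl ξ

lemma per_p (x₀ : U) (p : ℝ) (hp : 1 ≤ p) (f : ℝ → U) (hs : MemMpStar dist p x₀ f) (ε : ℝ)
    (hε : 0 < ε) : ∃ η > 0, ∃ σ > 0, ∀ τ, KS {t | η ≤ dist (f t) (f (t + τ))} σ →
      τ ∈ APeriods dist p ε f := by
  have hp0 : 0 < p := by linarith
  have hEp : 0 < ε ^ p := Real.rpow_pos_of_pos hε p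
  have h2p : (0:ℝ) < 2 ^ p := Real.rpow_pos_of_pos (by norm_num) p
  obtain ⟨⟨hfm, -⟩, hs⟩ := hs
  obtain ⟨δ, hδ, h⟩ := hs (ε ^ p / (2 ^ p * 16)) (by positivity)
  refine ⟨(ε ^ p / 8) ^ (1 / p), by positivity, δ / 2, by positivity, fun τ hτ => ?_⟩
  set η := (ε ^ p / 8) ^ (1 / p) with hη
  have hηp : η ^ p = ε ^ p / 8 := by
    rw [hη, ← Real.rpow_mul (by positivity), one_div_mul_cancel hp0.ne', Real.rpow_one]
  set A : ℝ → ℝ≥0∞ := fun t => ENNReal.ofReal (dist (f t) x₀ ^ p) with hA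
  have hAm : AEMeasurable A := by
    refine AEMeasurable.ennreal_ofReal (AEMeasurable.pow_const ?_ p)
    exact (hfm.dist aestronglyMeasurable_const).aemeasurable
  have hKI : ∀ T, MeasurableSet T → KS T (δ / 2) → KI (T.indicator A) (ε ^ p / (2 ^ p * 16)) := by
    intro T hT hK
    apply KI_of_limsup
    have := h T hT (hK.kappa_lt (by linarith) hδ)
    simpa only [setLIntegral_indicator hT, Set.inter_comm T] using this
  set T := toMeasurable volume {t | η ≤ dist (f t) (f (t + τ))} with hT
  have hTm : MeasurableSet T := measurableSet_toMeasurable _ _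
  have hTK : KS T (δ / 2) := KS_toMeas hτ
  have k1 := hKI T hTm hTK
  have hT2m : MeasurableSet {t | t + -τ ∈ T} := measurable_add_const (-τ) hTm
  have k2 := (hKI {t | t + -τ ∈ T} hT2m (hTK.shift (-τ))).shift τ
  have k3 := (k1.add k2 (hAm.indicator hTm) (by positivity) (by positivity)).const_mul (2 ^ p) h2p.le
  have k4 := (KI_const (ε ^ p / 8) (by positivity)).add k3 aemeasurable_const (by positivity)
    (by positivity)
  have k5 : KI (fun t => ENNReal.ofReal (dist (f t) (f (t + τ)) ^ p)) (ε ^ p / 2) := by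
    refine k4.mono (fun t => ?_) ?_
    · by_cases ht : η ≤ dist (f t) (f (t + τ))
      · have htT : t ∈ T := subset_toMeasurable _ _ ht
        have htT2 : t + τ ∈ {t | t + -τ ∈ T} := by
          show t + τ + -τ ∈ T
          simpa using htT
        rw [Set.indicator_of_mem htT, Set.indicator_of_mem htT2]
        refine le_trans ?_ le_add_self
        simp only [hA]
        rw [← ENNReal.ofReal_add (by positivity) (by positivity), ← ENNReal.ofReal_mul h2p.le]
        exact ENNReal.ofReal_le_ofReal (dist_pow_le x₀ _ _ p hp)
      · refine le_trans ?_ le_self_add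
        rw [← hηp]
        exact ENNReal.ofReal_le_ofReal (Real.rpow_le_rpow dist_nonneg (not_le.1 ht).le hp0.le)
    · have : 2 ^ p * (ε ^ p / (2 ^ p * 16) + ε ^ p / (2 ^ p * 16)) = ε ^ p / 8 := by
        field_simp; norm_num
      rw [this]; linarith
  refine (weyl_of_KI dist p hp f (fun t => f (t + τ)) _ k5).trans_lt ?_
  rw [ENNReal.ofReal_rpow_of_nonneg (by positivity) (by positivity),
    ENNReal.ofReal_lt_ofReal_iff hε]
  calc (ε ^ p / 2) ^ (1 / p) < (ε ^ p) ^ (1 / p) :=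
        Real.rpow_lt_rpow (by positivity) (by linarith) (by positivity)
    _ = ε := by rw [← Real.rpow_mul hε.le, mul_one_div_cancel hp0.ne', Real.rpow_one]

end fin

lemma exists_lower (E : ℕ → ℝ) (hE : ∀ j, 0 < E j) (k : ℕ) : ∃ e > 0, ∀ j < k, e ≤ E j := by
  induction k with
  | zero => exact ⟨1, one_pos, by simp⟩
  | succ k ih =>
    obtain ⟨e, he, h⟩ := ih
    refine ⟨min e (E k), lt_min he (hE k), fun j hj => ?_⟩
    rcases Nat.lt_succ_iff_lt_or_eq.1 hj with h1 | rfl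
    · exact (min_le_left _ _).trans (h j h1)
    · exact min_le_right _ _

open TopologicalSpace in
/-- **Theorem 3, last part.**
If moreover `F ∈ M*_p(ℝ, cl_b U)` for some `p ≥ 1`, then the selection `f_δ` of
Theorem 3 can be chosen so that in addition
`f_δ ∈ W̃(ℝ,U) ∩ M*_p(ℝ,U) ⊆ W̃_p(ℝ,U)`. -/
theorem weyl_tilde_selection_order_p {U : Type*} [MetricSpace U] [CompleteSpace U] (x₀ : U)
    (g : ℝ → U) (hg : MemWpTilde bdist 1 x₀ g)
    (F : ℝ → Closeds U) (hFne : ∀ t : ℝ, (F t : Set U).Nonempty)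
    (hF : MemWpTilde clDist 1 (⟨{x₀}, isClosed_singleton⟩ : Closeds U) F)
    (hT : ∀ ε > (0 : ℝ), RelDense (APeriods bdist 1 ε g ∩ APeriods clDist 1 ε F))
    (p : ℝ) (hp : 1 ≤ p)
    (hFbdd : ∀ t : ℝ, Bornology.IsBounded (F t : Set U))
    (hFstar : MemMpStar clbDist p (⟨{x₀}, isClosed_singleton⟩ : Closeds U) F)
    (δ : ℝ) (hδ : 0 < δ)
    (h : ℝ → ℝ) (hh : MemWp dist 1 (0 : ℝ) h)
    (hhdense : Dense (WMod bdist h)) (hhcount : (WMod bdist h).Countable) :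
    ∃ f : ℝ → U, MemWpTilde bdist 1 x₀ f ∧
      (∀ᵐ t ∂(volume : Measure ℝ), f t ∈ (F t : Set U)) ∧
      (∀ᵐ t ∂(volume : Measure ℝ),
        dist (f t) (g t) < Metric.infDist (g t) (F t) + δ) ∧
      (∀ ε' > (0 : ℝ), ∃ ε > (0 : ℝ),
        (APeriods bdist 1 ε g ∩ APeriods clDist 1 ε F) ∩ APeriods bdist 1 ε h ⊆
          APeriods bdist 1 ε' f) ∧
      MemMpStar dist p x₀ f ∧ MemWpTilde dist p x₀ f := by
  have hpi := Real.pi_pos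
  obtain ⟨f, a, haM, hrd, hfm, hfF, hfg, hper, hfin⟩ := core x₀ g F hg hFne hF hT δ hδ
    {x | 2 * Real.pi * x ∈ WMod bdist h} (by
      intro η hη
      obtain ⟨l, hl, h1, h2⟩ := hhdense.exists_between (show (0:ℝ) < 2 * Real.pi * η by positivity)
      refine ⟨l / (2 * Real.pi), ?_, by positivity, ?_⟩
      · show 2 * Real.pi * (l / (2 * Real.pi)) ∈ WMod bdist h
        rwa [mul_div_cancel₀ _ (by positivity)]
      · rw [div_lt_iff₀ (by positivity)]; linarith)
  have hPPrd : ∀ ε > 0, RelDense (PP (DD g F) a ε) := by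
    intro ε hε
    obtain ⟨k, e, he, hk⟩ := PP_of_Tk (DD g F) a ε hε
    exact ((Tk_fam (DD g F) hrd a k).rd e he).mono hk
  have hKSrd : ∀ η > 0, ∀ σ > 0, RelDense {τ | KS {t | η ≤ dist (f t) (f (t + τ))} σ} := by
    intro η hη σ hσ
    obtain ⟨ε, hε, hh⟩ := hper η hη σ hσ
    exact (hPPrd ε hε).mono hh
  have hstar := star_of x₀ F hFne p hp hFbdd hFstar f hfm hfF
  refine ⟨f, ⟨⟨hfm, 1, fun ξ => ?_⟩, fun ε hε => ?_, compact_cond bdist bdist_le f hfin⟩,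
    hfF, hfg, fun ε' hε' => ?_, hstar, hstar.1, fun ε hε => ?_,
    compact_cond dist (fun _ _ => le_rfl) f hfin⟩
  · refine (lintegral_mono (g := fun _ => (1 : ℝ≥0∞)) fun t => ?_).trans ?_
    · rw [Real.rpow_one]
      exact ENNReal.ofReal_le_one.2 (min_le_left _ _)
    · simp
  · exact (hKSrd (ε / 4) (by positivity) (ε / 4) (by positivity)).mono fun τ hτ =>
      per_of_KS f τ (ε / 4) (ε / 4) ε (by positivity) (by positivity) (by linarith) hτ
  · obtain ⟨ε, hε, hP⟩ := hper (ε' / 4) (by positivity) (ε' / 4) (by positivity)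
    obtain ⟨k, e, he, hk⟩ := PP_of_Tk (DD g F) a ε hε
    choose E hE0 hE using fun j => h_per h (a j) (haM j) e he
    obtain ⟨e2, he2, hlow⟩ := exists_lower E hE0 k
    refine ⟨min e2 (e * (e / 2)), by positivity, ?_⟩
    rintro τ ⟨hτ1, hτ2⟩
    refine per_of_KS f τ (ε' / 4) (ε' / 4) ε' (by positivity) (by positivity) (by linarith)
      (hP τ (hk ⟨T_sub_Tp hg.1.1 hF.1.1 e he _ (min_le_right _ _) hτ1, fun j hj => ?_⟩))
    exact hE j τ (APeriods_mono bdist 1 h ((min_le_left _ _).trans (hlow j hj)) hτ2)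
  · obtain ⟨η, hη, σ, hσ, hk⟩ := per_p x₀ p hp f hstar ε hε
    exact (hKSrd η hη σ hσ).mono hk
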